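/- Let K be a convex body in ℝ^n (n ≥ 2) with 0 in its interior such that either the barycenter of K is at the origin or the barycenter of the polar body K° is at the origin. Then there exists an absolute constant C > 0 such that for every 1 ≤ k ≤ n−1 and every k-dimensional linear subspace H of ℝ^n, vrad(K_out ∩ H) ≤ (n/k)·C·(log n)^3 · vrad(K_in ∩ H), where the volume radii are computed in H. -/

import Mathlib

open MeasureTheory Metric Set
open scoped ENNReal RealInnerProductSpace Pointwise

noncomputable section

/-- The polar body of `K`. -/
def polarBody {n : ℕ} (K : Set (EuclideanSpace ℝ (Fin n))) : Set (EuclideanSpace ℝ (Fin n)) :=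
  {x | ∀ y ∈ K, ⟪x, y⟫ ≤ 1}

/-- The volume radius of a subset of a `k`-dimensional subspace `H`: the `k`-th root of the
ratio of its `k`-dimensional (Hausdorff) volume to that of the unit ball of `H`. -/
def vrad {n : ℕ} (k : ℕ) (H : Submodule ℝ (EuclideanSpace ℝ (Fin n)))
    (A : Set (EuclideanSpace ℝ (Fin n))) : ℝ≥0∞ :=
  (μH[(k : ℝ)] A / μH[(k : ℝ)] (closedBall (0 : EuclideanSpace ℝ (Fin n)) 1 ∩ (H : Set _)))
    ^ ((k : ℝ)⁻¹)

set_option linter.unusedSectionVars false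

theorem bm1_compact {A B C : Set ℝ} (hA : IsCompact A) (hB : IsCompact B) (hA0 : A.Nonempty)
    (hB0 : B.Nonempty) (hC : ∀ a ∈ A, ∀ b ∈ B, a + b ∈ C) : volume A + volume B ≤ volume C := by
  obtain ⟨a, ha, hamax⟩ := hA.exists_isGreatest hA0
  obtain ⟨b, hb, hbmin⟩ := hB.exists_isLeast hB0
  have h1 : (fun x => x + b) '' A ∪ (fun x => a + x) '' B ⊆ C := by
    rintro _ (⟨x, hx, rfl⟩ | ⟨x, hx, rfl⟩)
    · exact hC _ hx _ hb
    · exact hC _ ha _ hx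
  refine le_trans ?_ (measure_mono h1)
  have hmA : MeasurableSet ((fun x => x + b) '' A) := (hA.image (by fun_prop)).measurableSet
  have hmB : MeasurableSet ((fun x => a + x) '' B) := (hB.image (by fun_prop)).measurableSet
  have hint : volume ((fun x => x + b) '' A ∩ (fun x => a + x) '' B) = 0 := by
    refine measure_mono_null (t := {a + b}) ?_ (by simp)
    rintro _ ⟨⟨x, hx, rfl⟩, ⟨y, hy, h⟩⟩
    have := hamax hx
    have := hbmin hy
    simp only at h
    simp only [mem_singleton_iff]
    linarith
  have := measure_union_add_inter (μ := (volume : Measure ℝ)) ((fun x => x + b) '' A) hmB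
  rw [hint, add_zero] at this
  rw [this]
  simp [image_add_left, image_add_right]

theorem bm1 {A B C : Set ℝ} (hA : MeasurableSet A) (hB : MeasurableSet B) (hA0 : A.Nonempty)
    (hB0 : B.Nonempty) (hC : ∀ a ∈ A, ∀ b ∈ B, a + b ∈ C) : volume A + volume B ≤ volume C := by
  obtain ⟨a0, ha0⟩ := hA0
  obtain ⟨b0, hb0⟩ := hB0
  rw [hA.measure_eq_iSup_isCompact, hB.measure_eq_iSup_isCompact]
  refine ENNReal.iSup_add_iSup_le fun K1 K2 => ?_
  by_cases h1 : K1 ⊆ A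
  · by_cases h1' : IsCompact K1
    · by_cases h2 : K2 ⊆ B
      · by_cases h2' : IsCompact K2
        · simp only [h1, h1', h2, h2', iSup_pos]
          calc volume K1 + volume K2 ≤ volume (insert a0 K1) + volume (insert b0 K2) := by
                gcongr <;> simp
            _ ≤ volume C := by
                refine bm1_compact (h1'.insert a0) (h2'.insert b0) (by simp) (by simp) ?_
                intro a ha b hb
                refine hC a ?_ b ?_
                · exact (insert_subset ha0 h1) ha
                · exact (insert_subset hb0 h2) hb
        · simp only [h1, h1', h2, h2', iSup_pos, iSup_false, bot_eq_zero', add_zero]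
          refine (measure_mono h1).trans ?_
          rw [← measure_preimage_add_right volume (-b0) A]
          refine measure_mono fun x hx => ?_
          simpa using hC _ hx _ hb0
      · simp only [h1, h1', h2, iSup_pos, iSup_false, bot_eq_zero', add_zero]
        refine (measure_mono h1).trans ?_
        rw [← measure_preimage_add_right volume (-b0) A]
        refine measure_mono fun x hx => ?_
        simpa using hC _ hx _ hb0
    · simp only [h1, h1', iSup_pos, iSup_false, bot_eq_zero', zero_add]
      refine (iSup_le fun h => iSup_le fun _ => measure_mono h).trans ?_
      rw [← measure_preimage_add volume (-a0) B]
      refine measure_mono fun x hx => ?_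
      simpa using hC _ ha0 _ hx
  · simp only [h1, iSup_false, bot_eq_zero', zero_add]
    refine (iSup_le fun h => iSup_le fun _ => measure_mono h).trans ?_
    rw [← measure_preimage_add volume (-a0) B]
    refine measure_mono fun x hx => ?_
    simpa using hC _ ha0 _ hx

theorem pl1_norm {t : ℝ} (ht0 : 0 < t) (ht1 : t < 1) {f g h : ℝ → ℝ} (hf : Measurable f)
    (hg : Measurable g) (hh : Measurable h) (f0 : ∀ x, 0 ≤ f x) (g0 : ∀ x, 0 ≤ g x)
    (h0 : ∀ x, 0 ≤ h x) (f1 : ∀ x, f x ≤ 1) (g1 : ∀ x, g x ≤ 1)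
    (fs : ∀ s < 1, ∃ x, s < f x) (gs : ∀ s < 1, ∃ x, s < g x)
    (H : ∀ x y s, 0 < s → s < f x → s < g y → s < h ((1 - t) * x + t * y)) :
    ENNReal.ofReal (1 - t) * (∫⁻ x, ENNReal.ofReal (f x)) +
      ENNReal.ofReal t * (∫⁻ x, ENNReal.ofReal (g x)) ≤ ∫⁻ x, ENNReal.ofReal (h x) := by
  rw [lintegral_eq_lintegral_meas_lt volume (Filter.Eventually.of_forall f0) hf.aemeasurable,
    lintegral_eq_lintegral_meas_lt volume (Filter.Eventually.of_forall g0) hg.aemeasurable,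
    lintegral_eq_lintegral_meas_lt volume (Filter.Eventually.of_forall h0) hh.aemeasurable,
    ← lintegral_const_mul' _ _ (by simp), ← lintegral_const_mul' _ _ (by simp)]
  refine (le_lintegral_add _ _).trans ?_
  refine setLIntegral_mono' measurableSet_Ioi fun s hs => ?_
  rcases lt_or_ge s 1 with h1 | h1
  · have e1 := Measure.addHaar_smul (volume : Measure ℝ) (1 - t) {a | s < f a}
    have e2 := Measure.addHaar_smul (volume : Measure ℝ) t {a | s < g a}
    simp only [Module.finrank_self, pow_one, abs_of_pos ht0, abs_of_pos (sub_pos.2 ht1)] at e1 e2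
    rw [← e1, ← e2]
    refine bm1 ((measurableSet_lt measurable_const hf).const_smul₀ _)
      ((measurableSet_lt measurable_const hg).const_smul₀ _) ?_ ?_ ?_
    · exact Set.Nonempty.smul_set (fs s h1)
    · exact Set.Nonempty.smul_set (gs s h1)
    · rintro _ ⟨x, hx, rfl⟩ _ ⟨y, hy, rfl⟩
      exact H x y s hs hx hy
  · have : {a | s < f a} = ∅ := by
      ext x; simp only [mem_ofPred_eq, mem_empty_iff_false, iff_false, not_lt]; exact (f1 x).trans h1
    rw [this]
    have : {a | s < g a} = ∅ := by
      ext x; simp only [mem_ofPred_eq, mem_empty_iff_false, iff_false, not_lt]; exact (g1 x).trans h1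
    rw [this]
    simp

theorem ennreal_amgm {t : ℝ} (ht0 : 0 < t) (ht1 : t < 1) (a b : ℝ≥0∞) :
    a ^ (1 - t) * b ^ t ≤ ENNReal.ofReal (1 - t) * a + ENNReal.ofReal t * b := by
  have h1 : 0 < 1 - t := sub_pos.2 ht1
  by_cases ha : a = ⊤
  · subst ha
    rw [ENNReal.mul_top (by simpa using h1)]; simp
  by_cases hb : b = ⊤
  · subst hb
    rw [ENNReal.mul_top (by simpa using ht0)]; simp
  lift a to NNReal using ha
  lift b to NNReal using hb
  have := NNReal.geom_mean_le_arith_mean2_weighted (1 - t).toNNReal t.toNNReal a b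
    (by rw [← Real.toNNReal_add h1.le ht0.le]; simp)
  rw [Real.coe_toNNReal _ h1.le, Real.coe_toNNReal _ ht0.le] at this
  rw [← ENNReal.coe_rpow_of_nonneg _ h1.le, ← ENNReal.coe_rpow_of_nonneg _ ht0.le]
  unfold ENNReal.ofReal
  exact_mod_cast this

def PL (E : Type*) [AddCommGroup E] [Module ℝ E] [MeasureSpace E] : Prop :=
  ∀ t : ℝ, 0 < t → t < 1 → ∀ f g h : E → ℝ≥0∞, Measurable f → Measurable g → Measurable h →
    (∀ x y, f x ^ (1 - t) * g y ^ t ≤ h ((1 - t) • x + t • y)) →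
    (∫⁻ x, f x) ^ (1 - t) * (∫⁻ x, g x) ^ t ≤ ∫⁻ x, h x

theorem pl1_bdd {t : ℝ} (ht0 : 0 < t) (ht1 : t < 1) {f g h : ℝ → ℝ≥0∞} (hf : Measurable f)
    (hg : Measurable g) (hh : Measurable h) (N : ℝ≥0∞) (hN : N ≠ ⊤) (fN : ∀ x, f x ≤ N)
    (gN : ∀ x, g x ≤ N)
    (H : ∀ x y, f x ^ (1 - t) * g y ^ t ≤ h ((1 - t) • x + t • y)) :
    (∫⁻ x, f x) ^ (1 - t) * (∫⁻ x, g x) ^ t ≤ ∫⁻ x, h x := by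
  have h1t : 0 < 1 - t := sub_pos.2 ht1
  set F := ⨆ x, f x with hF
  set G := ⨆ x, g x with hG
  have hFt : F ≠ ⊤ := ne_top_of_le_ne_top hN (iSup_le fN)
  have hGt : G ≠ ⊤ := ne_top_of_le_ne_top hN (iSup_le gN)
  have hfF : ∀ x, f x ≤ F := fun x => le_iSup f x
  have hgG : ∀ x, g x ≤ G := fun x => le_iSup g x
  by_cases hF0 : F = 0
  · have : ∀ x, f x = 0 := fun x => le_antisymm (hF0 ▸ hfF x) zero_le
    simp [this, ENNReal.zero_rpow_of_pos h1t]
  by_cases hG0 : G = 0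
  · have : ∀ x, g x = 0 := fun x => le_antisymm (hG0 ▸ hgG x) zero_le
    simp [this, ENNReal.zero_rpow_of_pos ht0]
  set M := F ^ (1 - t) * G ^ t with hM
  have hM0 : M ≠ 0 := by
    simp only [hM, ne_eq, mul_eq_zero, not_or]
    exact ⟨(ENNReal.rpow_pos (pos_iff_ne_zero.2 hF0) hFt).ne', (ENNReal.rpow_pos (pos_iff_ne_zero.2 hG0) hGt).ne'⟩
  have hMt : M ≠ ⊤ := ENNReal.mul_ne_top (ENNReal.rpow_ne_top_of_nonneg h1t.le hFt) (ENNReal.rpow_ne_top_of_nonneg ht0.le hGt)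
  have ff : ∀ x, f x / F ≤ 1 := fun x => ENNReal.div_le_of_le_mul (by simpa using hfF x)
  have gg : ∀ x, g x / G ≤ 1 := fun x => ENNReal.div_le_of_le_mul (by simpa using hgG x)
  have key := pl1_norm ht0 ht1 (f := fun x => (f x / F).toReal) (g := fun x => (g x / G).toReal)
    (h := fun x => (min (h x / M) 1).toReal) (hf.div_const _).ennreal_toReal (hg.div_const _).ennreal_toReal
    ((hh.div_const _).min measurable_const).ennreal_toReal (fun _ => ENNReal.toReal_nonneg)
    (fun _ => ENNReal.toReal_nonneg) (fun _ => ENNReal.toReal_nonneg)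
    (fun x => ENNReal.toReal_le_of_le_ofReal zero_le_one (by simpa using ff x))
    (fun x => ENNReal.toReal_le_of_le_ofReal zero_le_one (by simpa using gg x)) ?_ ?_ ?_
  · have e1 : ∀ x, ENNReal.ofReal ((f x / F).toReal) = F⁻¹ * f x := fun x => by
      rw [ENNReal.ofReal_toReal (ne_top_of_le_ne_top ENNReal.one_ne_top (ff x)), mul_comm]; rfl
    have e2 : ∀ x, ENNReal.ofReal ((g x / G).toReal) = G⁻¹ * g x := fun x => by
      rw [ENNReal.ofReal_toReal (ne_top_of_le_ne_top ENNReal.one_ne_top (gg x)), mul_comm]; rfl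
    have e3 : ∀ x, ENNReal.ofReal ((min (h x / M) 1).toReal) ≤ M⁻¹ * h x := fun x => by
      rw [ENNReal.ofReal_toReal (ne_top_of_le_ne_top ENNReal.one_ne_top (min_le_right _ _)), mul_comm]
      exact min_le_left _ _
    simp only [e1, e2] at key
    have key2 := key.trans (lintegral_mono e3)
    have key3 := (ennreal_amgm ht0 ht1 _ _).trans key2
    rw [lintegral_const_mul _ hf, lintegral_const_mul _ hg, lintegral_const_mul _ hh,
      ENNReal.mul_rpow_of_nonneg _ _ h1t.le, ENNReal.mul_rpow_of_nonneg _ _ ht0.le,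
      ENNReal.inv_rpow, ENNReal.inv_rpow, mul_mul_mul_comm] at key3
    have e4 : (F ^ (1 - t))⁻¹ * (G ^ t)⁻¹ = M⁻¹ := by
      rw [hM, ENNReal.mul_inv]
      · right; exact ENNReal.rpow_ne_top_of_nonneg ht0.le hGt
      · left; exact ENNReal.rpow_ne_top_of_nonneg h1t.le hFt
    rw [e4] at key3
    exact (ENNReal.mul_le_mul_iff_right (by simpa using hMt) (by simpa using hM0)).1 key3
  · intro s hs
    rcases lt_or_ge s 0 with h0 | h0
    · exact ⟨0, h0.trans_le ENNReal.toReal_nonneg⟩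
    have : ENNReal.ofReal s * F < F := by
      nth_rewrite 2 [← one_mul F]
      exact (ENNReal.mul_lt_mul_iff_left hF0 hFt).2 (by simpa using hs)
    obtain ⟨x, hx⟩ := lt_iSup_iff.1 this
    refine ⟨x, ?_⟩
    rw [← ENNReal.ofReal_lt_iff_lt_toReal h0 (ne_top_of_le_ne_top ENNReal.one_ne_top (ff x))]
    rwa [ENNReal.lt_div_iff_mul_lt (Or.inl hF0) (Or.inl hFt)]
  · intro s hs
    rcases lt_or_ge s 0 with h0 | h0
    · exact ⟨0, h0.trans_le ENNReal.toReal_nonneg⟩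
    have : ENNReal.ofReal s * G < G := by
      nth_rewrite 2 [← one_mul G]
      exact (ENNReal.mul_lt_mul_iff_left hG0 hGt).2 (by simpa using hs)
    obtain ⟨x, hx⟩ := lt_iSup_iff.1 this
    refine ⟨x, ?_⟩
    rw [← ENNReal.ofReal_lt_iff_lt_toReal h0 (ne_top_of_le_ne_top ENNReal.one_ne_top (gg x))]
    rwa [ENNReal.lt_div_iff_mul_lt (Or.inl hG0) (Or.inl hGt)]
  · intro x y s hs h1 h2
    rw [← ENNReal.ofReal_lt_iff_lt_toReal hs.le (ne_top_of_le_ne_top ENNReal.one_ne_top (ff x))] at h1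
    rw [← ENNReal.ofReal_lt_iff_lt_toReal hs.le (ne_top_of_le_ne_top ENNReal.one_ne_top (gg y))] at h2
    rw [← ENNReal.ofReal_lt_iff_lt_toReal hs.le (ne_top_of_le_ne_top ENNReal.one_ne_top (min_le_right _ _))]
    refine lt_min ?_ (h1.trans_le (ff x))
    have e := H x y
    have e1 : ENNReal.ofReal s < (f x / F) ^ (1 - t) * (g y / G) ^ t := by
      calc ENNReal.ofReal s = ENNReal.ofReal s ^ (1 - t) * ENNReal.ofReal s ^ t := by
            rw [← ENNReal.rpow_add _ _ (by simpa using hs) (by simp)]; simp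
        _ < _ := ENNReal.mul_lt_mul (ENNReal.rpow_lt_rpow h1 h1t) (ENNReal.rpow_lt_rpow h2 ht0)
    refine e1.trans_le ?_
    rw [ENNReal.div_rpow_of_nonneg _ _ h1t.le, ENNReal.div_rpow_of_nonneg _ _ ht0.le]
    rw [ENNReal.le_div_iff_mul_le (Or.inl hM0) (Or.inl hMt)]
    refine le_trans (le_of_eq ?_) e
    have a1 : F ^ (1 - t) ≠ 0 := (ENNReal.rpow_pos (pos_iff_ne_zero.2 hF0) hFt).ne'
    have a2 : F ^ (1 - t) ≠ ⊤ := ENNReal.rpow_ne_top_of_nonneg h1t.le hFt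
    have b1 : G ^ t ≠ 0 := (ENNReal.rpow_pos (pos_iff_ne_zero.2 hG0) hGt).ne'
    have b2 : G ^ t ≠ ⊤ := ENNReal.rpow_ne_top_of_nonneg ht0.le hGt
    rw [hM, mul_mul_mul_comm, ENNReal.div_mul_cancel a1 a2, ENNReal.div_mul_cancel b1 b2]

theorem pl_real : PL ℝ := by
  intro t ht0 ht1 f g h hf hg hh H
  have h1t : 0 < 1 - t := sub_pos.2 ht1
  have hs : ∀ f : ℝ → ℝ≥0∞, Measurable f → ∫⁻ x, f x = ⨆ N : ℕ, ∫⁻ x, min (f x) N := by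
    intro f hf
    rw [← lintegral_iSup (fun N => hf.min measurable_const)]
    · congr 1; ext x
      refine le_antisymm ?_ (iSup_le fun N => min_le_left _ _)
      rw [← inf_iSup_eq, ENNReal.iSup_natCast]; simp
    · intro a b hab x; simp only
      exact min_le_min le_rfl (by exact_mod_cast hab)
  have hm : ∀ f : ℝ → ℝ≥0∞, Monotone fun N : ℕ => ∫⁻ x, min (f x) N := fun f a b hab =>
    lintegral_mono fun x => min_le_min le_rfl (by exact_mod_cast hab)
  rw [hs f hf, hs g hg]
  have e1 := (ENNReal.orderIsoRpow _ h1t).map_iSup (fun N : ℕ => ∫⁻ x, min (f x) N)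
  have e2 := (ENNReal.orderIsoRpow _ ht0).map_iSup (fun N : ℕ => ∫⁻ x, min (g x) N)
  simp only [ENNReal.orderIsoRpow_apply] at e1 e2
  rw [e1, e2]
  rw [ENNReal.iSup_mul]
  refine iSup_le fun N => ?_
  rw [ENNReal.mul_iSup]
  refine iSup_le fun M => ?_
  calc _ ≤ (∫⁻ x, min (f x) (max N M : ℕ)) ^ (1 - t) * (∫⁻ x, min (g x) (max N M : ℕ)) ^ t := by
        gcongr
        · exact le_max_left _ _
        · exact le_max_right _ _
    _ ≤ _ := by
        refine pl1_bdd ht0 ht1 (hf.min measurable_const) (hg.min measurable_const) hh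
          ((max N M : ℕ)) (by simp) (fun x => min_le_right _ _) (fun x => min_le_right _ _) ?_
        intro x y
        refine le_trans ?_ (H x y)
        gcongr <;> exact min_le_left _ _

theorem PL.prod {E F : Type*} [AddCommGroup E] [Module ℝ E] [MeasureSpace E] [AddCommGroup F]
    [Module ℝ F] [MeasureSpace F] [SFinite (volume : Measure E)] [SFinite (volume : Measure F)] (hE : PL E) (hF : PL F) :
    PL (E × F) := by
  intro t ht0 ht1 f g h hf hg hh H
  change (∫⁻ x, f x ∂(volume.prod volume)) ^ (1 - t) * (∫⁻ x, g x ∂(volume.prod volume)) ^ t ≤ ∫⁻ x, h x ∂(volume.prod volume)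
  rw [lintegral_prod _ hf.aemeasurable, lintegral_prod _ hg.aemeasurable, lintegral_prod _ hh.aemeasurable]
  refine hE t ht0 ht1 _ _ _ hf.lintegral_prod_right' hg.lintegral_prod_right' hh.lintegral_prod_right' ?_
  intro x y
  refine hF t ht0 ht1 _ _ _ (by fun_prop) (by fun_prop) (by fun_prop) ?_
  intro a b
  exact H (x, a) (y, b)

theorem PL.equiv {E F : Type*} [AddCommGroup E] [Module ℝ E] [MeasureSpace E] [AddCommGroup F]
    [Module ℝ F] [MeasureSpace F] (e : E ≃ᵐ F) (he : MeasurePreserving e)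
    (hl : ∀ (a b : ℝ) x y, e (a • x + b • y) = a • e x + b • e y) (hE : PL E) : PL F := by
  intro t ht0 ht1 f g h hf hg hh H
  rw [← he.lintegral_comp_emb e.measurableEmbedding, ← he.lintegral_comp_emb e.measurableEmbedding,
    ← he.lintegral_comp_emb e.measurableEmbedding]
  refine hE t ht0 ht1 _ _ _ (by fun_prop) (by fun_prop) (by fun_prop) ?_
  intro x y
  rw [hl]
  exact H _ _

theorem pl_pi (n : ℕ) : PL (Fin n → ℝ) := by
  induction n with
  | zero =>
    intro t ht0 ht1 f g h hf hg hh H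
    have := H 0 0
    have e : ∀ f : (Fin 0 → ℝ) → ℝ≥0∞, ∫⁻ x, f x = f 0 := by
      intro f
      rw [volume_pi, Measure.pi_of_empty (x := 0), lintegral_dirac]
    simp only [e]
    convert this using 2
  | succ n ih =>
    refine PL.equiv (MeasurableEquiv.piFinSuccAbove (fun _ => ℝ) 0).symm
      (volume_preserving_piFinSuccAbove (fun _ => ℝ) 0).symm ?_ (pl_real.prod ih)
    intro a b x y
    exact funext fun i => Fin.cases (by simp [MeasurableEquiv.piFinSuccAbove])
      (fun j => by simp [MeasurableEquiv.piFinSuccAbove]) i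

theorem pl_inner (V : Type*) [NormedAddCommGroup V] [InnerProductSpace ℝ V] [FiniteDimensional ℝ V]
    [MeasurableSpace V] [BorelSpace V] : PL V := by
  let b := stdOrthonormalBasis ℝ V
  let e1 : (Fin (Module.finrank ℝ V) → ℝ) ≃ᵐ EuclideanSpace ℝ (Fin (Module.finrank ℝ V)) :=
    MeasurableEquiv.toLp 2 _
  have h1 : MeasurePreserving e1 := PiLp.volume_preserving_toLp _
  have h2 := PL.equiv e1 h1 (fun a b x y => rfl) (pl_pi _)
  exact PL.equiv b.measurableEquiv.symm b.measurePreserving_measurableEquiv.symm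
    (fun a c x y => by
      change b.repr.symm _ = _ • b.repr.symm _ + _ • b.repr.symm _
      simp) h2


section BMsec
variable {V : Type*} [NormedAddCommGroup V] [InnerProductSpace ℝ V] [FiniteDimensional ℝ V]
    [MeasurableSpace V] [BorelSpace V]

theorem bm_mult {t : ℝ} (ht0 : 0 < t) (ht1 : t < 1) {A B C : Set V} (hA : MeasurableSet A)
    (hB : MeasurableSet B) (hC : MeasurableSet C)
    (H : ∀ a ∈ A, ∀ b ∈ B, (1 - t) • a + t • b ∈ C) :
    volume A ^ (1 - t) * volume B ^ t ≤ volume C := by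
  have h1t : 0 < 1 - t := sub_pos.2 ht1
  have := pl_inner V t ht0 ht1 (A.indicator 1) (B.indicator 1) (C.indicator 1)
    (measurable_one.indicator hA) (measurable_one.indicator hB) (measurable_one.indicator hC) ?_
  · simpa [lintegral_indicator_one, hA, hB, hC] using this
  · intro x y
    by_cases hx : x ∈ A
    · by_cases hy : y ∈ B
      · simp [hx, hy, H x hx y hy]
      · simp [hy, ENNReal.zero_rpow_of_pos ht0]
    · simp [hx, ENNReal.zero_rpow_of_pos h1t]

theorem bm_mid {A B C : Set V} (hA : MeasurableSet A)
    (hB : MeasurableSet B) (hC : MeasurableSet C)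
    (H : ∀ a ∈ A, ∀ b ∈ B, (2⁻¹ : ℝ) • (a + b) ∈ C) :
    volume A * volume B ≤ volume C ^ 2 := by
  have := bm_mult (t := 2⁻¹) (by norm_num) (by norm_num) hA hB hC (by
    intro a ha b hb
    have := H a ha b hb
    rw [smul_add] at this
    convert this using 3
    norm_num)
  calc volume A * volume B = (volume A ^ (1 - 2⁻¹ : ℝ) * volume B ^ (2⁻¹ : ℝ)) ^ 2 := by
        rw [mul_pow, ← ENNReal.rpow_natCast, ← ENNReal.rpow_natCast, ← ENNReal.rpow_mul,
          ← ENNReal.rpow_mul]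
        norm_num
    _ ≤ _ := by gcongr

theorem vol_smul_root {k : ℕ} (hk : Module.finrank ℝ V = k) (hk0 : 0 < k) {c : ℝ} (hc : 0 ≤ c) (A : Set V) :
    (volume.real (c • A)) ^ ((k : ℝ)⁻¹) = c * (volume.real A) ^ ((k : ℝ)⁻¹) := by
  rw [Measure.real, Measure.addHaar_smul, hk, ENNReal.toReal_mul, ENNReal.toReal_ofReal (abs_nonneg _),
    abs_of_nonneg (by positivity), Real.mul_rpow (by positivity) (by positivity),
    Real.pow_rpow_inv_natCast hc hk0.ne']
  rfl

theorem bm_root {k : ℕ} (hk : Module.finrank ℝ V = k) (hk0 : 0 < k) {t : ℝ} (ht0 : 0 ≤ t)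
    (ht1 : t ≤ 1) {A B C : Set V} (hA : MeasurableSet A)
    (hB : MeasurableSet B) (hC : MeasurableSet C) (hA0 : A.Nonempty) (hB0 : B.Nonempty)
    (fC : volume C ≠ ⊤)
    (H : ∀ a ∈ A, ∀ b ∈ B, (1 - t) • a + t • b ∈ C) :
    (1 - t) * (volume.real A) ^ ((k : ℝ)⁻¹) + t * (volume.real B) ^ ((k : ℝ)⁻¹)
      ≤ (volume.real C) ^ ((k : ℝ)⁻¹) := by
  have hki : (0 : ℝ) < (k : ℝ)⁻¹ := by positivity
  have h1t : 0 ≤ 1 - t := sub_nonneg.2 ht1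
  obtain ⟨a0, ha0⟩ := hA0
  obtain ⟨b0, hb0⟩ := hB0
  have eA : (1 - t) * (volume.real A) ^ ((k : ℝ)⁻¹) ≤ (volume.real C) ^ ((k : ℝ)⁻¹) := by
    rw [← vol_smul_root hk hk0 h1t]
    refine Real.rpow_le_rpow measureReal_nonneg ?_ hki.le
    refine ENNReal.toReal_mono fC ?_
    rw [← measure_preimage_add_right volume (-(t • b0))]
    refine measure_mono ?_
    rintro x ⟨a, ha, hx⟩
    have := H a ha b0 hb0
    simp only at hx
    rw [hx] at this
    simpa using this
  have eB : t * (volume.real B) ^ ((k : ℝ)⁻¹) ≤ (volume.real C) ^ ((k : ℝ)⁻¹) := by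
    rw [← vol_smul_root hk hk0 ht0]
    refine Real.rpow_le_rpow measureReal_nonneg ?_ hki.le
    refine ENNReal.toReal_mono fC ?_
    rw [← measure_preimage_add volume (-((1 - t) • a0))]
    refine measure_mono ?_
    rintro x ⟨a, ha, hx⟩
    have := H a0 ha0 a ha
    simp only at hx
    rw [hx] at this
    simpa using this
  rcases ht0.eq_or_lt with rfl | ht0
  · simpa using eA
  rcases ht1.eq_or_lt with rfl | ht1
  · simpa using eB
  have h1t : 0 < 1 - t := sub_pos.2 ht1
  set a := (volume.real A) ^ ((k : ℝ)⁻¹) with ha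
  set b := (volume.real B) ^ ((k : ℝ)⁻¹) with hb
  have a0' : 0 ≤ a := by positivity
  have b0' : 0 ≤ b := by positivity
  rcases a0'.eq_or_lt with h | a0'
  · rw [← h]; simpa using eB
  rcases b0'.eq_or_lt with h | b0'
  · rw [← h]; simpa using eA
  set c := (1 - t) * a + t * b with hc
  have hc0 : 0 < c := by positivity
  have nA : volume (a⁻¹ • A) = 1 := by
    have : (volume.real (a⁻¹ • A)) ^ ((k : ℝ)⁻¹) = 1 := by
      rw [vol_smul_root hk hk0 (by positivity), ← ha]; field_simp
    have h2 : volume.real (a⁻¹ • A) = 1 := by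
      rw [← Real.rpow_inv_natCast_pow (measureReal_nonneg) hk0.ne', this, one_pow]
    rw [Measure.real, ENNReal.toReal_eq_one_iff] at h2
    exact h2
  have nB : volume (b⁻¹ • B) = 1 := by
    have : (volume.real (b⁻¹ • B)) ^ ((k : ℝ)⁻¹) = 1 := by
      rw [vol_smul_root hk hk0 (by positivity), ← hb]; field_simp
    have h2 : volume.real (b⁻¹ • B) = 1 := by
      rw [← Real.rpow_inv_natCast_pow (measureReal_nonneg) hk0.ne', this, one_pow]
    rw [Measure.real, ENNReal.toReal_eq_one_iff] at h2
    exact h2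
  have key := bm_mult (t := t * b / c) (by positivity) (by
      rw [div_lt_one hc0, hc]; nlinarith [mul_pos h1t a0']) (hA.const_smul₀ a⁻¹) (hB.const_smul₀ b⁻¹)
      (hC.const_smul₀ c⁻¹) (by
    rintro _ ⟨x, hx, rfl⟩ _ ⟨y, hy, rfl⟩
    refine ⟨_, H x hx y hy, ?_⟩
    simp only [smul_add, smul_smul]
    congr 2
    · rw [hc]; field_simp; ring
    · field_simp)
  rw [nA, nB] at key
  simp only [ENNReal.one_rpow, mul_one] at key
  have k2 : 1 ≤ (volume.real (c⁻¹ • C)) := by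
    have : volume (c⁻¹ • C) ≠ ⊤ := by
      rw [Measure.addHaar_smul]; exact ENNReal.mul_ne_top (by simp) fC
    rw [Measure.real, ← ENNReal.ofReal_le_iff_le_toReal this]
    simpa using key
  have k3 : 1 ≤ (volume.real (c⁻¹ • C)) ^ ((k : ℝ)⁻¹) := Real.one_le_rpow k2 hki.le
  rw [vol_smul_root hk hk0 (by positivity)] at k3
  rw [inv_mul_eq_div, one_le_div hc0] at k3
  exact k3
end BMsec


theorem supergrad {E : Type*} [NormedAddCommGroup E] [NormedSpace ℝ E] [FiniteDimensional ℝ E]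
    {L : Set E} (h0 : (0 : E) ∈ interior L) {G : E → ℝ} (hG : ConcaveOn ℝ L G) :
    ∃ l : E →L[ℝ] ℝ, ∀ x ∈ L, G x ≤ G 0 + l x := by
  have hGi : ConcaveOn ℝ (interior L) G := hG.subset interior_subset hG.1.interior
  have hcont : ContinuousOn G (interior L) := hG.continuousOn_interior
  have hop : IsOpen {p : E × ℝ | p.1 ∈ interior L ∧ p.2 < G p.1} := by
    have h1 : ContinuousOn (fun p : E × ℝ => G p.1 - p.2) (Prod.fst ⁻¹' interior L) := by
      refine ContinuousOn.sub ?_ continuousOn_snd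
      exact hcont.comp continuousOn_fst (fun x hx => hx)
    have := h1.isOpen_inter_preimage (isOpen_interior.preimage continuous_fst) (isOpen_Ioi (a := (0 : ℝ)))
    convert this using 1
    ext p
    simp
  obtain ⟨f, hf⟩ := geometric_hahn_banach_open_point hGi.convex_strict_hypograph hop
    (x := ((0 : E), G 0)) (by simp)
  set c := f (0, 1) with hc
  have hdec : ∀ x : E, ∀ s : ℝ, f (x, s) = f (x, 0) + s * c := by
    intro x s
    have : (x, s) = (x, (0 : ℝ)) + s • ((0 : E), (1 : ℝ)) := by simp
    rw [this, map_add, map_smul]; rfl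
  have hcpos : 0 < c := by
    have := hf (0, G 0 - 1) ⟨h0, by simp⟩
    rw [hdec, hdec 0 (G 0)] at this
    linarith
  have hint : ∀ x ∈ interior L, f (x, 0) + G x * c ≤ G 0 * c := by
    intro x hx
    by_contra hcon
    push Not at hcon
    set d := (f (x, 0) + G x * c - G 0 * c) / c with hd
    have hdp : 0 < d := div_pos (by linarith) hcpos
    have := hf (x, G x - d) ⟨hx, by simp [hdp]⟩
    rw [hdec, hdec 0 (G 0)] at this
    have e : d * c = f (x, 0) + G x * c - G 0 * c := by rw [hd]; field_simp
    have e0 : f ((0 : E), (0 : ℝ)) = 0 := map_zero f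
    rw [e0] at this
    nlinarith
  have hall : ∀ x ∈ L, f (x, 0) + G x * c ≤ G 0 * c := by
    intro x hx
    have hx2 : (2⁻¹ : ℝ) • x ∈ interior L := by
      have := hG.1.combo_interior_self_mem_interior h0 hx (a := 2⁻¹) (b := 2⁻¹) (by norm_num) (by norm_num) (by norm_num)
      simpa using this
    have h1 := hint _ hx2
    have h2 := hG.2 (interior_subset h0) hx (show (0 : ℝ) ≤ 2⁻¹ by norm_num)
      (show (0 : ℝ) ≤ 2⁻¹ by norm_num) (by norm_num)
    simp only [smul_zero, zero_add, smul_eq_mul] at h2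
    have h3 : f ((2⁻¹ : ℝ) • x, 0) = 2⁻¹ * f (x, 0) := by
      have : ((2⁻¹ : ℝ) • x, (0 : ℝ)) = (2⁻¹ : ℝ) • (x, (0 : ℝ)) := by simp
      rw [this, map_smul]; rfl
    rw [h3] at h1
    nlinarith
  refine ⟨-(c⁻¹ • (f.comp (ContinuousLinearMap.inl ℝ E ℝ))), fun x hx => ?_⟩
  have := hall x hx
  simp only [neg_apply, smul_apply, ContinuousLinearMap.comp_apply,
    ContinuousLinearMap.inl_apply, smul_eq_mul]
  have e : c * (G 0 + -(c⁻¹ * f (x, 0)) - G x) = G 0 * c - f (x, 0) - G x * c := by field_simp; ring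
  have : 0 ≤ c * (G 0 + -(c⁻¹ * f (x, 0)) - G x) := by rw [e]; linarith
  have := nonneg_of_mul_nonneg_right this hcpos
  linarith

theorem lemmaS {E : Type*} [NormedAddCommGroup E] [NormedSpace ℝ E] [FiniteDimensional ℝ E]
    [MeasurableSpace E] [BorelSpace E] (ρ : Measure E) [IsFiniteMeasureOnCompacts ρ]
    {L : Set E} (hL : IsCompact L) (h0 : (0 : E) ∈ interior L)
    (hbar : ∫ x in L, x ∂ρ = 0) {G : E → ℝ} (hG : ConcaveOn ℝ L G) (hnn : ∀ x ∈ L, 0 ≤ G x)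
    (hpos : 0 < G 0) :
    ∃ L' ⊆ L, IsCompact L' ∧ Convex ℝ L' ∧ ρ L ≤ 2 * ρ L' ∧ ∀ x ∈ L', G x ≤ 2 * G 0 := by
  obtain ⟨l, hl⟩ := supergrad h0 hG
  have hfin : ρ L ≠ ⊤ := hL.measure_ne_top
  have hcl : IsClosed {x | l x ≤ G 0} := isClosed_le l.continuous continuous_const
  refine ⟨L ∩ {x | l x ≤ G 0}, inter_subset_left, hL.inter_right hcl,
    hG.1.inter (convex_halfSpace_le l.toLinearMap.isLinear _), ?_, ?_⟩
  · have hint : IntegrableOn (fun x => l x + G 0) L ρ :=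
      (l.continuous.add continuous_const).continuousOn.integrableOn_compact hL
    have hid : IntegrableOn (fun x => x) L ρ := continuous_id.continuousOn.integrableOn_compact hL
    have hl0 : IntegrableOn (fun x => l x) L ρ := l.continuous.continuousOn.integrableOn_compact hL
    have e1 : ∫ x in L, (l x + G 0) ∂ρ = G 0 * ρ.real L := by
      rw [integral_add hl0 (integrableOn_const hfin), l.integral_comp_comm hid, hbar]
      simp [mul_comm]
    have h1 := mul_meas_ge_le_integral_of_nonneg (μ := ρ.restrict L) (f := fun x => l x + G 0)
      (by
        refine (ae_restrict_iff' hL.measurableSet).2 (Filter.Eventually.of_forall fun x hx => ?_)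
        have := hl x hx
        have := hnn x hx
        simp only [Pi.zero_apply]
        linarith) hint (2 * G 0)
    rw [e1] at h1
    have h2 : 2 * ρ.real (L \ {x | l x ≤ G 0}) ≤ ρ.real L := by
      have : ρ.real (L \ {x | l x ≤ G 0}) ≤ (ρ.restrict L).real {x | 2 * G 0 ≤ l x + G 0} := by
        rw [measureReal_restrict_apply (measurableSet_le measurable_const (by fun_prop))]
        refine measureReal_mono ?_ (ne_top_of_le_ne_top hfin (measure_mono inter_subset_right))
        rintro x ⟨hx, hx2⟩
        refine ⟨?_, hx⟩
        simp only [mem_ofPred_eq, not_le] at hx2 ⊢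
        linarith
      nlinarith
    have h3 := measureReal_inter_add_sdiff (μ := ρ) (s := L) hcl.measurableSet hfin
    have h4 : ρ.real L ≤ 2 * ρ.real (L ∩ {x | l x ≤ G 0}) := by linarith
    have hf' : ρ (L ∩ {x | l x ≤ G 0}) ≠ ⊤ := ne_top_of_le_ne_top hfin (measure_mono inter_subset_left)
    rw [← ENNReal.toReal_le_toReal hfin (ENNReal.mul_ne_top (by simp) hf'), ENNReal.toReal_mul]
    simpa [Measure.real] using h4
  · rintro x ⟨hx, hx2⟩
    have := hl x hx
    simp only [mem_ofPred_eq] at hx2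
    linarith


theorem eps_bound {k n : ℕ} (hn : 0 < n) (hkn : k ≤ n) :
    ((2 : ℝ) ^ k)⁻¹ ≤ (1 - (k : ℝ) / (2 * n)) ^ n := by
  have hn' : (0 : ℝ) < n := by exact_mod_cast hn
  have hk' : (k : ℝ) ≤ n := by exact_mod_cast hkn
  have := rpow_one_add_le_one_add_mul_self (s := -(1/2)) (by norm_num) (p := (k : ℝ) / n)
    (by positivity) (by rw [div_le_one hn']; exact hk')
  have h2 : ((1 + -(1/2) : ℝ) ^ ((k : ℝ) / n)) ^ n = ((2 : ℝ) ^ k)⁻¹ := by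
    rw [← Real.rpow_natCast, ← Real.rpow_mul (by norm_num), div_mul_cancel₀ _ hn'.ne', Real.rpow_natCast, ← inv_pow]
    norm_num
  rw [← h2]
  calc _ ≤ (1 + (k : ℝ) / n * -(1/2)) ^ n := by gcongr
    _ = _ := by congr 1; field_simp; ring

section
variable {V : Type*} [NormedAddCommGroup V] [InnerProductSpace ℝ V] [FiniteDimensional ℝ V]
    [MeasurableSpace V] [BorelSpace V]
variable {W : Type*} [NormedAddCommGroup W] [InnerProductSpace ℝ W] [FiniteDimensional ℝ W]
    [MeasurableSpace W] [BorelSpace W]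

instance haarProd : (volume : Measure (V × W)).IsAddHaarMeasure :=
  inferInstanceAs (Measure.prod volume volume).IsAddHaarMeasure

theorem lint_dilate {k : ℕ} (hk : Module.finrank ℝ V = k) {g : V → ℝ≥0∞} (hg : Measurable g) (a : V) :
    2 ^ k * ∫⁻ x, g ((2 : ℝ) • x - a) = ∫⁻ x, g x := by
  have e1 : ∫⁻ x, g ((2 : ℝ) • x - a) = ∫⁻ x, g (x - a) ∂(Measure.map (fun x : V => (2 : ℝ) • x) volume) := by
    rw [lintegral_map (by fun_prop) (by fun_prop)]
  rw [e1, Measure.map_addHaar_smul _ (by norm_num), lintegral_smul_measure, lintegral_sub_right_eq_self, hk,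
    smul_eq_mul, ← mul_assoc, abs_of_pos (by positivity), ENNReal.ofReal_inv_of_pos (by positivity),
    ENNReal.ofReal_pow (by norm_num)]
  simp only [ENNReal.ofReal_ofNat]
  rw [ENNReal.mul_inv_cancel (by simp) (by simp), one_mul]

theorem tonelli2 {k : ℕ} (hk : Module.finrank ℝ V = k) {f g : V → ℝ≥0∞} (hf : Measurable f)
    (hg : Measurable g) :
    2 ^ k * ∫⁻ x, ∫⁻ u, f (x + u) * g (x - u) = (∫⁻ x, f x) * ∫⁻ x, g x := by
  have e1 : ∀ x : V, ∫⁻ u, f (x + u) * g (x - u) = ∫⁻ a, f a * g ((2 : ℝ) • x - a) := by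
    intro x
    rw [← lintegral_add_left_eq_self (fun a => f a * g ((2 : ℝ) • x - a)) x]
    congr 1; ext u; congr 2; rw [two_smul]; abel
  simp only [e1]
  rw [lintegral_lintegral_swap (by fun_prop)]
  rw [← lintegral_const_mul' _ _ (by simp)]
  rw [← lintegral_mul_const _ hf]
  congr 1; ext a
  rw [lintegral_const_mul _ (by fun_prop), mul_left_comm, lint_dilate hk hg]

theorem isCompact_sub' {E : Type*} [NormedAddCommGroup E] {A B : Set E} (hA : IsCompact A)
    (hB : IsCompact B) : IsCompact (A - B) := by
  rw [← sub_image_prod]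
  exact (hA.prod hB).image (by fun_prop)

theorem slice_compact {K : Set (V × W)} (hK : IsCompact K) (p : V × W) :
    IsCompact {u : V | p + (u, 0) ∈ K} := by
  refine IsCompact.of_isClosed_subset (hK.image (f := fun q => q.1 - p.1) (by fun_prop)) ?_ ?_
  · exact hK.isClosed.preimage (f := fun u : V => p + (u, 0)) (by fun_prop)
  · intro u hu
    exact ⟨_, hu, by simp⟩

theorem slice_compact' {K : Set (V × W)} (hK : IsCompact K) (y : W) :
    IsCompact {x : V | (x, y) ∈ K} := by
  have := slice_compact hK (0, y)
  simpa using this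

theorem sym_slice_bound {k : ℕ} (hk : Module.finrank ℝ V = k) {A : Set V} (hA : IsCompact A) (hc : Convex ℝ A)
    (c : ℝ≥0∞) (H : ∀ x ∈ A, volume {u | x + u ∈ A ∧ x - u ∈ A} ≤ c) : volume A ≤ 2 ^ k * c := by
  have hm := hA.measurableSet
  have h1 := tonelli2 hk (f := A.indicator 1) (g := A.indicator 1) (measurable_one.indicator hm)
    (measurable_one.indicator hm)
  rw [lintegral_indicator_one hm] at h1
  have h2 : ∀ x, ∫⁻ u, A.indicator (1 : V → ℝ≥0∞) (x + u) * A.indicator (1 : V → ℝ≥0∞) (x - u) ≤ A.indicator (fun _ => c) x := by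
    intro x
    have e : ∫⁻ u, A.indicator (1 : V → ℝ≥0∞) (x + u) * A.indicator (1 : V → ℝ≥0∞) (x - u) = volume {u | x + u ∈ A ∧ x - u ∈ A} := by
      rw [← lintegral_indicator_one]
      · congr 1; ext u
        by_cases h1 : x + u ∈ A <;> by_cases h2 : x - u ∈ A <;> simp [h1, h2, indicator]
      · exact (hm.preimage (f := fun u => x + u) (by fun_prop)).inter (hm.preimage (f := fun u => x - u) (by fun_prop))
    rw [e]
    by_cases hx : x ∈ A
    · simpa [hx] using H x hx
    · have : {u | x + u ∈ A ∧ x - u ∈ A} = ∅ := by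
        ext u
        simp only [mem_ofPred_eq, mem_empty_iff_false, iff_false, not_and]
        intro h1 h2
        apply hx
        have := hc h1 h2 (a := 2⁻¹) (b := 2⁻¹) (by norm_num) (by norm_num) (by norm_num)
        rw [← smul_add] at this
        convert this using 1
        rw [add_add_sub_cancel, ← two_smul ℝ x, smul_smul]; norm_num
      simp [this]
  have h3 := lintegral_mono (μ := volume) h2
  rw [lintegral_indicator_const hm] at h3
  have h4 : volume A * volume A ≤ (2 ^ k * c) * volume A := by
    rw [← h1, mul_assoc]; gcongr
  by_cases h0 : volume A = 0
  · rw [h0]; exact zero_le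
  exact (ENNReal.mul_le_mul_iff_left h0 hA.measure_ne_top).1 h4

theorem case1_D1 {k : ℕ} (hk : Module.finrank ℝ V = k) (hk0 : 0 < k) {K : Set (V × W)} (hK : IsCompact K)
    (hKc : Convex ℝ K) (h0 : (0 : V × W) ∈ interior K) (hbar : ∫ x in K, x = 0) :
    volume K ≤ 2 * (4 ^ k * volume {u : V | (u, (0 : W)) ∈ K ∧ (-u, (0 : W)) ∈ K}) *
      volume (Prod.snd '' K) := by
  set S : V × W → Set V := fun p => {u | p + (u, 0) ∈ K ∧ p - (u, 0) ∈ K} with hS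
  have hScl : ∀ p, IsCompact (S p) := fun p => by
    refine (slice_compact hK p).inter_right ?_
    exact hK.isClosed.preimage (f := fun u : V => p - (u, 0)) (by fun_prop)
  set G : V × W → ℝ := fun p => (volume.real (S p)) ^ ((k : ℝ)⁻¹) with hG
  have hGc : ConcaveOn ℝ K G := by
    refine ⟨hKc, fun p hp q hq a b ha hb hab => ?_⟩
    have ha' : a = 1 - b := by linarith
    subst ha'
    simp only [smul_eq_mul]
    refine bm_root hk hk0 hb (by linarith) (hScl p).measurableSet (hScl q).measurableSet
      (hScl _).measurableSet ⟨0, by simp [hS, ← Prod.zero_eq_mk, hp]⟩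
      ⟨0, by simp [hS, ← Prod.zero_eq_mk, hq]⟩ (hScl _).measure_ne_top ?_
    rintro u ⟨hu1, hu2⟩ w ⟨hw1, hw2⟩
    constructor
    · convert hKc hu1 hw1 ha hb hab using 1
      ext <;> simp <;> module
    · convert hKc hu2 hw2 ha hb hab using 1
      ext <;> simp <;> module
  have hS0 : S 0 = {u : V | (u, (0 : W)) ∈ K ∧ (-u, (0 : W)) ∈ K} := by
    ext u; simp [hS]
  have hpos : 0 < volume (S 0) := by
    refine Measure.measure_pos_of_mem_nhds volume (x := 0) ?_
    have hn : K ∈ nhds (0 : V × W) := mem_interior_iff_mem_nhds.1 h0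
    rw [hS0]
    refine Filter.inter_mem ?_ ?_
    · exact (Continuous.prodMk_left (0 : W)).continuousAt.preimage_mem_nhds (x := (0 : V)) hn
    · have : Continuous fun u : V => (-u, (0 : W)) := by fun_prop
      refine this.continuousAt.preimage_mem_nhds (x := (0 : V)) ?_
      rw [neg_zero]; exact hn
  have hG0 : 0 < G 0 := Real.rpow_pos_of_pos (ENNReal.toReal_pos hpos.ne' (hScl 0).measure_ne_top) _
  obtain ⟨L, hLK, hL, hLc, hLv, hLG⟩ := lemmaS volume hK h0 hbar hGc (fun x _ => by positivity) hG0
  have hsl : ∀ y, volume {x : V | (x, y) ∈ L} ≤ 4 ^ k * volume (S 0) := by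
    intro y
    have : (4 : ℝ≥0∞) ^ k * volume (S 0) = 2 ^ k * (2 ^ k * volume (S 0)) := by
      rw [← mul_assoc, ← mul_pow]; norm_num
    rw [this]
    refine sym_slice_bound hk (slice_compact' hL y) ?_ _ ?_
    · intro a ha b hb s t hs ht hst
      have := hLc ha hb hs ht hst
      simp only [Prod.smul_mk, Prod.mk_add_mk, ← add_smul, hst, one_smul] at this
      exact this
    · intro x hx
      calc volume {u | x + u ∈ {x : V | (x, y) ∈ L} ∧ x - u ∈ {x : V | (x, y) ∈ L}} ≤ volume (S (x, y)) := by
            refine measure_mono fun u hu => ⟨?_, ?_⟩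
            · simpa using hLK hu.1
            · simpa using hLK hu.2
        _ ≤ _ := by
            have h := hLG (x, y) hx
            have h' : G (x, y) ^ k ≤ (2 * G 0) ^ k := by gcongr
            rw [mul_pow, hG] at h'
            simp only at h'
            rw [Real.rpow_inv_natCast_pow measureReal_nonneg hk0.ne',
              Real.rpow_inv_natCast_pow measureReal_nonneg hk0.ne'] at h'
            rw [← ENNReal.toReal_le_toReal (hScl _).measure_ne_top
              (ENNReal.mul_ne_top (by simp) (hScl _).measure_ne_top), ENNReal.toReal_mul]
            simpa [Measure.real] using h'
  calc volume K ≤ 2 * volume L := hLv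
    _ = 2 * ∫⁻ y, volume {x : V | (x, y) ∈ L} := by
        rw [Measure.volume_eq_prod, Measure.prod_apply_symm hL.measurableSet]; rfl
    _ ≤ 2 * ∫⁻ y, (Prod.snd '' K).indicator (fun _ => 4 ^ k * volume (S 0)) y := by
        gcongr with y
        by_cases hy : y ∈ Prod.snd '' K
        · rw [indicator_of_mem hy]; exact hsl y
        · have : {x : V | (x, y) ∈ L} = ∅ := by
            ext x; simp only [mem_ofPred_eq, mem_empty_iff_false, iff_false]
            exact fun hx => hy ⟨_, hLK hx, rfl⟩
          simp [this]
    _ = _ := by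
        rw [lintegral_indicator_const (hK.image continuous_snd).measurableSet, hS0, ← mul_assoc]

theorem case1_D2 {k : ℕ} (hk : Module.finrank ℝ V = k) {K : Set (V × W)} (hK : IsCompact K)
    (hKc : Convex ℝ K) :
    volume (Prod.snd '' K) * (∫⁻ y, volume {x : V | (x, y) ∈ K} ^ 2) ≤ 4 ^ k * volume K ^ 2 := by
  have hY := (hK.image continuous_snd).measurableSet
  have hv : Measurable fun y => volume {x : V | (x, y) ∈ K} := measurable_measure_prodMk_right hK.measurableSet
  have := pl_inner W 2⁻¹ (by norm_num) (by norm_num) ((Prod.snd '' K).indicator 1)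
    (fun y => volume {x : V | (x, y) ∈ K} ^ 2) (fun y => 2 ^ k * volume {x : V | (x, y) ∈ K})
    (measurable_one.indicator hY) (hv.pow_const 2) (hv.const_mul _) ?_
  · rw [lintegral_indicator_one hY, lintegral_const_mul _ hv] at this
    have e : ∫⁻ y, volume {x : V | (x, y) ∈ K} = volume K := by
      rw [Measure.volume_eq_prod, Measure.prod_apply_symm hK.measurableSet]; rfl
    rw [e] at this
    have h2 := pow_le_pow_left' this 2
    rw [mul_pow, mul_pow, ← ENNReal.rpow_natCast, ← ENNReal.rpow_mul, ← ENNReal.rpow_natCast (_ ^ (2⁻¹ : ℝ)), ← ENNReal.rpow_mul] at h2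
    norm_num at h2
    have e4 : (4 : ℝ≥0∞) ^ k = (2 ^ k) ^ 2 := by rw [← pow_mul, mul_comm, pow_mul]; norm_num
    rw [e4]; exact h2
  · intro y0 y1
    by_cases hy : y0 ∈ Prod.snd '' K
    · obtain ⟨⟨x0, y0⟩, hx0, rfl⟩ := hy
      simp only [indicator_of_mem (show (x0, y0).2 ∈ Prod.snd '' K from ⟨_, hx0, rfl⟩),
        Pi.one_apply, ENNReal.one_rpow, one_mul]
      rw [← ENNReal.rpow_natCast, ← ENNReal.rpow_mul]
      norm_num
      have e := Measure.addHaar_smul (volume : Measure V) 2⁻¹ {x : V | (x, y1) ∈ K}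
      have e2 : volume {x : V | (x, y1) ∈ K} = 2 ^ k * volume ((2⁻¹ : ℝ) • {x : V | (x, y1) ∈ K}) := by
        rw [e, hk, ← mul_assoc, abs_of_pos (by positivity), inv_pow, ENNReal.ofReal_inv_of_pos (by positivity),
          ENNReal.ofReal_pow (by norm_num)]
        simp only [ENNReal.ofReal_ofNat]
        rw [ENNReal.mul_inv_cancel (by simp) (by simp), one_mul]
      rw [e2]
      gcongr 2 ^ k * ?_
      rw [← measure_preimage_add volume (-((2⁻¹ : ℝ) • x0))]
      refine measure_mono ?_
      rintro x ⟨z, hz, hx⟩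
      have := hKc hx0 hz (a := 2⁻¹) (b := 2⁻¹) (by norm_num) (by norm_num) (by norm_num)
      simp only [Prod.smul_mk, Prod.mk_add_mk] at this hx
      rw [hx] at this
      norm_num
      simpa using this
    · simp [hy, ENNReal.zero_rpow_of_pos (show (0 : ℝ) < 1 - 2⁻¹ by norm_num)]

theorem case1_D3 {k n : ℕ} (hk : Module.finrank ℝ V = k) (hn : Module.finrank ℝ (V × W) = n)
    {K : Set (V × W)} (hK : IsCompact K)
    (hKc : Convex ℝ K) {ε : ℝ} (hε0 : 0 ≤ ε) (hε1 : ε ≤ 1) :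
    ENNReal.ofReal (ε ^ k * (1 - ε) ^ n) * volume {u : V | (u, (0 : W)) ∈ K - K} * volume K ≤
      ∫⁻ y, volume {x : V | (x, y) ∈ K} ^ 2 := by
  have hm := hK.measurableSet
  have hB : IsCompact {u : V | (u, (0 : W)) ∈ K - K} := slice_compact' (isCompact_sub' hK hK) 0
  set B := {u : V | (u, (0 : W)) ∈ K - K} with hBdef
  have hv : Measurable fun y => volume {x : V | (x, y) ∈ K} := measurable_measure_prodMk_right hm
  set Q : Set (V × (V × W)) := {z | z.2 ∈ K ∧ z.2 - (z.1, 0) ∈ K} with hQ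
  have hQm : MeasurableSet Q := (hm.preimage (f := fun z : V × (V × W) => z.2) (by fun_prop)).inter
    (hm.preimage (f := fun z : V × (V × W) => z.2 - (z.1, 0)) (by fun_prop))
  have h1 : (volume : Measure (V × (V × W))) Q = ∫⁻ y, volume {x : V | (x, y) ∈ K} ^ 2 := by
    rw [Measure.volume_eq_prod, Measure.prod_apply_symm hQm]
    have e1 : ∀ p : V × W, volume ((fun x => (x, p)) ⁻¹' Q) = K.indicator 1 p * volume {x : V | (x, p.2) ∈ K} := by
      rintro ⟨x, y⟩
      by_cases hp : (x, y) ∈ K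
      · rw [indicator_of_mem hp, Pi.one_apply, one_mul]
        have : (fun u => (u, (x, y))) ⁻¹' Q = (fun u => x - u) ⁻¹' {x : V | (x, y) ∈ K} := by
          ext u; simp [hQ, hp]
        rw [this]
        exact (Measure.measurePreserving_sub_left volume x).measure_preimage (slice_compact' hK y).measurableSet.nullMeasurableSet
      · have : (fun u => (u, (x, y))) ⁻¹' Q = ∅ := by
          ext u; simp [hQ, hp]
        rw [this, indicator_of_notMem hp]; simp
    simp only [e1]
    rw [Measure.volume_eq_prod, lintegral_prod_symm]
    · congr 1; ext y
      simp only
      rw [lintegral_mul_const]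
      · rw [sq, ← lintegral_indicator_one (slice_compact' hK y).measurableSet]
        rfl
      · exact (measurable_one.indicator hm).comp (by fun_prop)
    · exact ((measurable_one.indicator hm).mul (hv.comp measurable_snd)).aemeasurable
  rw [← h1, Measure.volume_eq_prod V (V × W), Measure.prod_apply hQm]
  have h1e : 0 ≤ 1 - ε := by linarith
  calc _ = (ENNReal.ofReal ((1 - ε) ^ n) * volume K) * volume (ε • B) := by
        rw [Measure.addHaar_smul, hk, abs_of_nonneg (by positivity), ENNReal.ofReal_mul (by positivity)]
        ring
    _ = ∫⁻ u in ε • B, (ENNReal.ofReal ((1 - ε) ^ n) * volume K) := by rw [setLIntegral_const]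
    _ ≤ ∫⁻ u in ε • B, volume (Prod.mk u ⁻¹' Q) := by
        refine setLIntegral_mono' (hB.measurableSet.const_smul₀ ε) ?_
        rintro _ ⟨b, ⟨p, hp, q, hq, hpq⟩, rfl⟩
        have e := Measure.addHaar_smul (volume : Measure (V × W)) (1 - ε) K
        rw [hn, abs_of_nonneg (by positivity)] at e
        rw [← e, ← measure_preimage_add volume (-(ε • p))]
        refine measure_mono ?_
        rintro z ⟨w, hw, hz⟩
        simp only at hz hpq
        have hz' : z = (1 - ε) • w + ε • p := by rw [hz]; abel
        refine ⟨?_, ?_⟩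
        · change z ∈ K
          rw [hz']; exact hKc hw hp h1e hε0 (by ring)
        · have : z - (ε • b, 0) = (1 - ε) • w + ε • q := by
            have e3 : (ε • b, (0 : W)) = ε • (p - q) := by rw [hpq]; simp
            rw [e3, hz', smul_sub]; abel
          change z - (ε • b, 0) ∈ K
          rw [this]; exact hKc hw hq h1e hε0 (by ring)
    _ ≤ _ := setLIntegral_le_lintegral _ _

theorem case1 {k n : ℕ} (hk : Module.finrank ℝ V = k) (hk0 : 0 < k) (hn : Module.finrank ℝ (V × W) = n)
    {K : Set (V × W)} (hK : IsCompact K)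
    (hKc : Convex ℝ K) (h0 : (0 : V × W) ∈ interior K) (hbar : ∫ x in K, x = 0) :
    volume {u : V | (u, (0 : W)) ∈ K - K} ≤
      ENNReal.ofReal ((128 * n / k) ^ k) * volume {u : V | (u, (0 : W)) ∈ K ∧ (-u, (0 : W)) ∈ K} := by
  have hkn : k ≤ n := by rw [← hk, ← hn, Module.finrank_prod]; omega
  have hn0 : 0 < n := by omega
  have hk' : (0 : ℝ) < k := by exact_mod_cast hk0
  have hn' : (0 : ℝ) < n := by exact_mod_cast hn0
  have hkn' : (k : ℝ) ≤ n := by exact_mod_cast hkn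
  have d1 := case1_D1 hk hk0 hK hKc h0 hbar
  have d2 := case1_D2 hk hK hKc
  have d3 := case1_D3 hk hn hK hKc (ε := (k : ℝ) / (2 * n)) (by positivity) (by rw [div_le_one (by positivity)]; linarith)
  set f0 := volume {u : V | (u, (0 : W)) ∈ K ∧ (-u, (0 : W)) ∈ K}
  set b := volume {u : V | (u, (0 : W)) ∈ K - K}
  set Y := volume (Prod.snd '' K)
  set I := ∫⁻ y, volume {x : V | (x, y) ∈ K} ^ 2
  have hKt : volume K ≠ ⊤ := hK.measure_ne_top
  have hK0 : volume K ≠ 0 := (Measure.measure_pos_of_mem_nhds volume (mem_interior_iff_mem_nhds.1 h0)).ne'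
  have hYt : Y ≠ ⊤ := (hK.image continuous_snd).measure_ne_top
  have hY0 : Y ≠ 0 := by
    intro h; rw [h] at d1; simp at d1; exact hK0 d1
  set c := ENNReal.ofReal (((k : ℝ) / (2 * n)) ^ k * (1 - (k : ℝ) / (2 * n)) ^ n)
  have e1 : c * b * Y ≤ 4 ^ k * volume K := by
    refine (ENNReal.mul_le_mul_iff_left hK0 hKt).1 ?_
    calc c * b * Y * volume K = Y * (c * b * volume K) := by ring
      _ ≤ Y * I := by gcongr
      _ ≤ _ := d2.trans (le_of_eq (by ring))
  have e2 : c * b ≤ 4 ^ k * (2 * (4 ^ k * f0)) := by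
    refine (ENNReal.mul_le_mul_iff_left hY0 hYt).1 ?_
    calc _ ≤ 4 ^ k * volume K := e1
      _ ≤ 4 ^ k * (2 * (4 ^ k * f0) * Y) := by gcongr
      _ = _ := by ring
  have hc : ENNReal.ofReal (((k : ℝ) / (4 * n)) ^ k) ≤ c := by
    refine ENNReal.ofReal_le_ofReal ?_
    calc ((k : ℝ) / (4 * n)) ^ k = ((k : ℝ) / (2 * n)) ^ k * ((2 : ℝ) ^ k)⁻¹ := by
          rw [← inv_pow, ← mul_pow]; congr 1; field_simp; ring
      _ ≤ _ := by gcongr; exact eps_bound hn0 hkn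
  calc b = ENNReal.ofReal ((4 * n / (k : ℝ)) ^ k) * (ENNReal.ofReal (((k : ℝ) / (4 * n)) ^ k) * b) := by
        rw [← mul_assoc, ← ENNReal.ofReal_mul (by positivity), ← mul_pow]
        have : (4 * n / (k : ℝ)) * ((k : ℝ) / (4 * n)) = 1 := by field_simp
        rw [this]; simp
    _ ≤ ENNReal.ofReal ((4 * n / (k : ℝ)) ^ k) * (4 ^ k * (2 * (4 ^ k * f0))) := by
        gcongr ENNReal.ofReal ((4 * n / (k : ℝ)) ^ k) * ?_
        exact le_trans (by gcongr) e2
    _ ≤ ENNReal.ofReal ((4 * n / (k : ℝ)) ^ k) * (4 ^ k * (2 ^ k * (4 ^ k * f0))) := by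
        gcongr
        exact le_self_pow (by norm_num) hk0.ne'
    _ = _ := by
        have e3 : ∀ a : ℕ, ((a : ℝ≥0∞)) ^ k = ENNReal.ofReal ((a : ℝ) ^ k) := fun a => by
          rw [ENNReal.ofReal_pow (by positivity), ENNReal.ofReal_natCast]
        have e4 := e3 4
        have e2 := e3 2
        push_cast at e4 e2
        rw [e4, e2]
        simp only [← mul_assoc]
        rw [← ENNReal.ofReal_mul (by positivity), ← ENNReal.ofReal_mul (by positivity), ← ENNReal.ofReal_mul (by positivity),
          ← mul_pow, ← mul_pow, ← mul_pow]
        congr 3; ring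
end


section
variable {V : Type*} [NormedAddCommGroup V] [InnerProductSpace ℝ V] [FiniteDimensional ℝ V]
    [MeasurableSpace V] [BorelSpace V]
variable {W : Type*} [NormedAddCommGroup W] [InnerProductSpace ℝ W] [FiniteDimensional ℝ W]
    [MeasurableSpace W] [BorelSpace W]

theorem conv_vol {A B : Set V} (hA : IsCompact A) (hB : IsCompact B) :
    ∫⁻ s, volume {x | x ∈ A ∧ x - s ∈ B} = volume A * volume B := by
  have hmA := hA.measurableSet
  have hmB := hB.measurableSet
  set Q : Set (V × V) := {z | z.2 ∈ A ∧ z.2 - z.1 ∈ B} with hQ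
  have hQm : MeasurableSet Q := (hmA.preimage (f := fun z : V × V => z.2) (by fun_prop)).inter
    (hmB.preimage (f := fun z : V × V => z.2 - z.1) (by fun_prop))
  have h1 : (volume : Measure (V × V)) Q = ∫⁻ s, volume {x | x ∈ A ∧ x - s ∈ B} := by
    rw [Measure.volume_eq_prod, Measure.prod_apply hQm]; rfl
  rw [← h1, Measure.volume_eq_prod, Measure.prod_apply_symm hQm]
  have e1 : ∀ p : V, volume ((fun x => (x, p)) ⁻¹' Q) = A.indicator (fun _ => volume B) p := by
    intro p
    by_cases hp : p ∈ A
    · rw [indicator_of_mem hp]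
      have : (fun u => (u, p)) ⁻¹' Q = (fun u => p - u) ⁻¹' B := by
        ext u; simp [hQ, hp]
      rw [this]
      exact (Measure.measurePreserving_sub_left volume p).measure_preimage hmB.nullMeasurableSet
    · have : (fun u => (u, p)) ⁻¹' Q = ∅ := by
        ext u; simp [hQ, hp]
      rw [this, indicator_of_notMem hp]; simp
  simp only [e1]
  rw [lintegral_indicator_const hmA, mul_comm]

theorem half_vol {k : ℕ} (hk : Module.finrank ℝ V = k) (A : Set V) :
    2 ^ k * volume ((2⁻¹ : ℝ) • A) = volume A := by
  rw [Measure.addHaar_smul, hk, ← mul_assoc, abs_of_pos (by positivity), inv_pow,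
    ENNReal.ofReal_inv_of_pos (by positivity), ENNReal.ofReal_pow (by norm_num)]
  simp only [ENNReal.ofReal_ofNat]
  rw [ENNReal.mul_inv_cancel (by simp) (by simp), one_mul]

theorem rs_lower {k : ℕ} (hk : Module.finrank ℝ V = k) {A B : Set V} (hA : IsCompact A) (hB : IsCompact B)
    (cA : Convex ℝ A) (cB : Convex ℝ B) :
    volume (A - B) * volume (A ∩ B) ≤ 4 ^ k * (volume A * volume B) := by
  have e4 : (4 : ℝ≥0∞) ^ k = 2 ^ k * 2 ^ k := by rw [← mul_pow]; norm_num
  rw [← half_vol hk (A - B), ← half_vol hk (A ∩ B), e4, ← conv_vol hA hB]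
  calc _ = 2 ^ k * 2 ^ k * (volume ((2⁻¹ : ℝ) • (A ∩ B)) * volume ((2⁻¹ : ℝ) • (A - B))) := by ring
    _ ≤ _ := by
      gcongr 2 ^ k * 2 ^ k * ?_
      rw [← setLIntegral_const]
      refine le_trans ?_ (setLIntegral_le_lintegral ((2⁻¹ : ℝ) • (A - B)) _)
      refine setLIntegral_mono' ((isCompact_sub' hA hB).measurableSet.const_smul₀ _) ?_
      rintro _ ⟨_, ⟨a, ha, b, hb, rfl⟩, rfl⟩
      rw [← measure_preimage_add volume (-((2⁻¹ : ℝ) • a))]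
      refine measure_mono ?_
      rintro z ⟨w, hw, hz⟩
      simp only at hz
      have hz' : z = (2⁻¹ : ℝ) • w + (2⁻¹ : ℝ) • a := by rw [hz]; abel
      refine ⟨?_, ?_⟩
      · rw [hz']; exact cA hw.1 ha (by norm_num) (by norm_num) (by norm_num)
      · have : z - (2⁻¹ : ℝ) • (a - b) = (2⁻¹ : ℝ) • w + (2⁻¹ : ℝ) • b := by
          rw [hz', smul_sub]; abel
        simp only
        rw [this]; exact cB hw.2 hb (by norm_num) (by norm_num) (by norm_num)

theorem rs_upper {A B : Set V} (hA : IsCompact A) (hB : IsCompact B)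
    (cA : Convex ℝ A) (cB : Convex ℝ B) (sA : ∀ x ∈ A, -x ∈ A) (sB : ∀ x ∈ B, -x ∈ B) :
    volume A * volume B ≤ volume (A - B) * volume (A ∩ B) := by
  have hmA := hA.measurableSet
  have hmB := hB.measurableSet
  rw [← conv_vol hA hB, mul_comm, ← lintegral_indicator_const (isCompact_sub' hA hB).measurableSet]
  refine lintegral_mono fun s => ?_
  have hms : ∀ s, MeasurableSet {x | x ∈ A ∧ x - s ∈ B} := fun s =>
    hmA.inter (hmB.preimage (f := fun x => x - s) (by fun_prop))
  by_cases hs : s ∈ A - B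
  · rw [indicator_of_mem hs]
    have h1 := bm_mid (hms s) (hms (-s)) (hmA.inter hmB) (by
      rintro a ⟨ha, ha'⟩ b ⟨hb, hb'⟩
      rw [smul_add]
      refine ⟨cA ha hb (by norm_num) (by norm_num) (by norm_num), ?_⟩
      have := cB ha' hb' (a := 2⁻¹) (b := 2⁻¹) (by norm_num) (by norm_num) (by norm_num)
      convert this using 1
      module)
    have h2 : volume {x | x ∈ A ∧ x - -s ∈ B} = volume {x | x ∈ A ∧ x - s ∈ B} := by
      rw [← Measure.measure_neg volume {x | x ∈ A ∧ x - s ∈ B}]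
      congr 1
      ext x
      simp only [mem_neg, mem_ofPred_eq, sub_neg_eq_add]
      constructor
      · rintro ⟨h, h'⟩
        exact ⟨sA _ h, by have := sB _ h'; rwa [neg_add, ← sub_eq_add_neg] at this⟩
      · rintro ⟨h, h'⟩
        have a1 := sA _ h
        have a2 := sB _ h'
        rw [neg_neg] at a1
        refine ⟨a1, ?_⟩
        convert a2 using 1; abel
    rw [h2, ← sq] at h1
    exact (ENNReal.pow_le_pow_left_iff two_ne_zero).1 h1
  · have : {x | x ∈ A ∧ x - s ∈ B} = ∅ := by
      ext x; simp only [mem_ofPred_eq, mem_empty_iff_false, iff_false]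
      rintro ⟨h, h'⟩
      exact hs ⟨x, h, x - s, h', by simp⟩
    rw [this]; simp

theorem slice_compact_snd {K : Set (V × W)} (hK : IsCompact K) (x : V) :
    IsCompact {y : W | (x, y) ∈ K} := by
  refine IsCompact.of_isClosed_subset (hK.image continuous_snd) ?_ ?_
  · exact hK.isClosed.preimage (f := fun u : W => (x, u)) (by fun_prop)
  · intro u hu
    exact ⟨_, hu, rfl⟩

theorem case2_a {k m : ℕ} (hk : Module.finrank ℝ V = k) (hm : Module.finrank ℝ W = m)
    {L : Set (V × W)} (hL : IsCompact L) (hLc : Convex ℝ L) {ε : ℝ} (hε0 : 0 ≤ ε) (hε1 : ε ≤ 1) (w0 : V) :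
    ENNReal.ofReal (ε ^ k * (1 - ε) ^ m) * (volume (Prod.fst '' L) * volume {z : W | (w0, z) ∈ L}) ≤ volume L := by
  have h1e : 0 ≤ 1 - ε := by linarith
  have hP := (hL.image continuous_fst).measurableSet
  rw [Measure.volume_eq_prod V W, Measure.prod_apply hL.measurableSet]
  calc _ = (ENNReal.ofReal ((1 - ε) ^ m) * volume {z : W | (w0, z) ∈ L}) * volume (ε • (Prod.fst '' L)) := by
        rw [Measure.addHaar_smul, hk, abs_of_nonneg (by positivity), ENNReal.ofReal_mul (by positivity)]
        ring
    _ = ∫⁻ u in ε • (Prod.fst '' L), (ENNReal.ofReal ((1 - ε) ^ m) * volume {z : W | (w0, z) ∈ L}) := by rw [setLIntegral_const]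
    _ ≤ ∫⁻ u in ε • (Prod.fst '' L), volume (Prod.mk ((1 - ε) • w0 + u) ⁻¹' L) := by
        refine setLIntegral_mono' (hP.const_smul₀ ε) ?_
        rintro _ ⟨_, ⟨⟨w, z0⟩, hw, rfl⟩, rfl⟩
        have e := Measure.addHaar_smul (volume : Measure W) (1 - ε) {z : W | (w0, z) ∈ L}
        rw [hm, abs_of_nonneg (by positivity)] at e
        rw [← e, ← measure_preimage_add volume (-(ε • z0))]
        refine measure_mono ?_
        rintro z ⟨y, hy, hz⟩
        simp only at hz
        have hz' : z = (1 - ε) • y + ε • z0 := by rw [hz]; abel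
        have := hLc hy hw h1e hε0 (by ring)
        simp only [Prod.smul_mk, Prod.mk_add_mk] at this
        rw [← hz'] at this
        exact this
    _ ≤ ∫⁻ u, volume (Prod.mk ((1 - ε) • w0 + u) ⁻¹' L) := setLIntegral_le_lintegral _ _
    _ = _ := lintegral_add_left_eq_self (fun u => volume (Prod.mk u ⁻¹' L)) _

theorem case2_b' {k : ℕ} (hk : Module.finrank ℝ V = k) {L : Set (V × W)} (hL : IsCompact L)
    (hLc : Convex ℝ L) (M c : ℝ≥0∞) (hM : ∀ w, volume {z : W | (w, z) ∈ L} ≤ M)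
    (hc : ∀ p ∈ L, volume {η : V | ∃ ζ : W, p + (η, ζ) ∈ L ∧ p - (η, ζ) ∈ L} ≤ c) :
    volume L ≤ 2 ^ k * (c * M) := by
  have hmL := hL.measurableSet
  set R : Set (V × (V × W)) := (fun x : (V × W) × (V × W) =>
    ((2⁻¹ : ℝ) • (x.1.1 - x.2.1), (2⁻¹ : ℝ) • (x.1 + x.2))) '' (L ×ˢ L) with hR
  have hRm : MeasurableSet R := ((hL.prod hL).image (by fun_prop)).measurableSet
  have u1 : (volume : Measure (V × (V × W))) R ≤ c * volume L := by
    rw [Measure.volume_eq_prod, Measure.prod_apply_symm hRm, ← lintegral_indicator_const hmL]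
    refine lintegral_mono fun p => ?_
    by_cases hp : p ∈ L
    · rw [indicator_of_mem hp]
      refine le_trans (measure_mono ?_) (hc p hp)
      rintro η ⟨⟨q, r⟩, ⟨hq, hr⟩, hqr⟩
      simp only [Prod.mk.injEq] at hqr
      obtain ⟨h1, h2⟩ := hqr
      refine ⟨(2⁻¹ : ℝ) • (q.2 - r.2), ?_, ?_⟩
      · convert hq using 1
        rw [← h1, ← h2]
        ext <;> simp <;> module
      · convert hr using 1
        rw [← h1, ← h2]
        ext <;> simp <;> module
    · rw [indicator_of_notMem hp]
      have : (fun x => (x, p)) ⁻¹' R = ∅ := by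
        ext η
        simp only [mem_preimage, mem_empty_iff_false, iff_false]
        rintro ⟨⟨q, r⟩, ⟨hq, hr⟩, hqr⟩
        simp only [Prod.mk.injEq] at hqr
        apply hp
        rw [← hqr.2, smul_add]
        exact hLc hq hr (by norm_num) (by norm_num) (by norm_num)
      rw [this]; simp
  have hv : Measurable fun w => volume {z : W | (w, z) ∈ L} := measurable_measure_prodMk_left hmL
  set g : V → ℝ≥0∞ := fun w => volume {z : W | (w, z) ∈ L} ^ (2⁻¹ : ℝ) with hg
  have hgm : Measurable g := hv.pow_const _
  have u2 : ∫⁻ w, ∫⁻ η, g (w + η) * g (w - η) ≤ (volume : Measure (V × (V × W))) R := by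
    rw [lintegral_lintegral_swap (by fun_prop), Measure.volume_eq_prod, Measure.prod_apply hRm]
    refine lintegral_mono fun η => ?_
    have hRη : MeasurableSet (Prod.mk η ⁻¹' R) := hRm.preimage (by fun_prop)
    rw [Measure.volume_eq_prod, Measure.prod_apply hRη]
    refine lintegral_mono fun w => ?_
    have h1 := bm_mid (slice_compact_snd hL (w + η)).measurableSet (slice_compact_snd hL (w - η)).measurableSet
      (hRη.preimage (f := Prod.mk w) (by fun_prop)) (by
        intro a ha b hb
        refine ⟨((w + η, a), (w - η, b)), ⟨ha, hb⟩, ?_⟩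
        simp only [Prod.mk_add_mk, Prod.smul_mk]
        congr 2 <;> module)
    have h2 := ENNReal.rpow_le_rpow h1 (show (0 : ℝ) ≤ 2⁻¹ by norm_num)
    rw [ENNReal.mul_rpow_of_nonneg _ _ (by norm_num), ← ENNReal.rpow_natCast, ← ENNReal.rpow_mul] at h2
    rw [show ((2 : ℕ) : ℝ) * 2⁻¹ = 1 by norm_num, ENNReal.rpow_one] at h2
    exact h2
  have u3 := tonelli2 hk hgm hgm
  have u4 : volume L ≤ M ^ (2⁻¹ : ℝ) * ∫⁻ w, g w := by
    rw [Measure.volume_eq_prod, Measure.prod_apply hmL, ← lintegral_const_mul _ hgm]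
    refine lintegral_mono fun w => ?_
    calc volume (Prod.mk w ⁻¹' L) = volume (Prod.mk w ⁻¹' L) ^ (2⁻¹ : ℝ) * volume (Prod.mk w ⁻¹' L) ^ (2⁻¹ : ℝ) := by
          rw [← ENNReal.rpow_add_of_nonneg _ _ (by norm_num) (by norm_num)]; norm_num
      _ ≤ _ := by
          gcongr
          · exact hM w
          · exact le_rfl
  by_cases h0 : volume L = 0
  · rw [h0]; exact zero_le
  refine (ENNReal.mul_le_mul_iff_left h0 hL.measure_ne_top).1 ?_
  calc volume L * volume L ≤ (M ^ (2⁻¹ : ℝ) * ∫⁻ w, g w) * (M ^ (2⁻¹ : ℝ) * ∫⁻ w, g w) := by gcongr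
    _ = (M ^ (2⁻¹ : ℝ) * M ^ (2⁻¹ : ℝ)) * ((∫⁻ w, g w) * ∫⁻ w, g w) := by ring
    _ = M * (2 ^ k * ∫⁻ w, ∫⁻ η, g (w + η) * g (w - η)) := by
        rw [u3, ← ENNReal.rpow_add_of_nonneg _ _ (by norm_num) (by norm_num)]; norm_num
    _ ≤ M * (2 ^ k * (c * volume L)) := by gcongr; exact u2.trans u1
    _ = _ := by ring

theorem case2_b {k : ℕ} (hk : Module.finrank ℝ V = k) (hk0 : 0 < k) {K : Set (V × W)} (hK : IsCompact K)
    (hKc : Convex ℝ K) (h0 : (0 : V × W) ∈ interior K) (hbar : ∫ x in K, x = 0)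
    (M : ℝ≥0∞) (hM : ∀ w, volume {z : W | (w, z) ∈ K} ≤ M) :
    volume K ≤ 2 * (4 ^ k * (volume {η : V | ∃ ζ : W, (η, ζ) ∈ K ∧ -(η, ζ) ∈ K} * M)) := by
  set S : V × W → Set V := fun p => {η | ∃ ζ : W, p + (η, ζ) ∈ K ∧ p - (η, ζ) ∈ K} with hS
  have hScl : ∀ p, IsCompact (S p) := fun p => by
    have h1 : IsCompact {q : V × W | p + q ∈ K ∧ p - q ∈ K} := by
      refine IsCompact.of_isClosed_subset (hK.image (f := fun q => q - p) (by fun_prop)) ?_ ?_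
      · exact (hK.isClosed.preimage (f := fun u => p + u) (by fun_prop)).inter
          (hK.isClosed.preimage (f := fun u => p - u) (by fun_prop))
      · rintro q ⟨hq, -⟩
        exact ⟨_, hq, by simp⟩
    convert h1.image continuous_fst using 1
    ext η
    simp [hS]
  set G : V × W → ℝ := fun p => (volume.real (S p)) ^ ((k : ℝ)⁻¹) with hG
  have hGc : ConcaveOn ℝ K G := by
    refine ⟨hKc, fun p hp q hq a b ha hb hab => ?_⟩
    have ha' : a = 1 - b := by linarith
    subst ha'
    simp only [smul_eq_mul]
    refine bm_root hk hk0 hb (by linarith) (hScl p).measurableSet (hScl q).measurableSet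
      (hScl _).measurableSet ⟨0, 0, by simp [← Prod.zero_eq_mk, hp]⟩
      ⟨0, 0, by simp [← Prod.zero_eq_mk, hq]⟩ (hScl _).measure_ne_top ?_
    rintro u ⟨z, hu1, hu2⟩ w ⟨y, hw1, hw2⟩
    refine ⟨(1 - b) • z + b • y, ?_, ?_⟩
    · convert hKc hu1 hw1 ha hb hab using 1
      ext <;> simp <;> module
    · convert hKc hu2 hw2 ha hb hab using 1
      ext <;> simp <;> module
  have hS0 : S 0 = {η : V | ∃ ζ : W, (η, ζ) ∈ K ∧ -(η, ζ) ∈ K} := by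
    ext u; simp [hS]
  have hpos : 0 < volume (S 0) := by
    refine Measure.measure_pos_of_mem_nhds volume (x := 0) ?_
    have hn : K ∈ nhds (0 : V × W) := mem_interior_iff_mem_nhds.1 h0
    have : {u : V | (u, (0 : W)) ∈ K ∧ (-u, (0 : W)) ∈ K} ∈ nhds (0 : V) := by
      refine Filter.inter_mem ?_ ?_
      · exact (Continuous.prodMk_left (0 : W)).continuousAt.preimage_mem_nhds (x := (0 : V)) hn
      · have : Continuous fun u : V => (-u, (0 : W)) := by fun_prop
        refine this.continuousAt.preimage_mem_nhds (x := (0 : V)) ?_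
        rw [neg_zero]; exact hn
    refine Filter.mem_of_superset this ?_
    rintro u ⟨h1, h2⟩
    exact ⟨0, by simpa using h1, by simpa using h2⟩
  have hG0 : 0 < G 0 := Real.rpow_pos_of_pos (ENNReal.toReal_pos hpos.ne' (hScl 0).measure_ne_top) _
  obtain ⟨L, hLK, hL, hLc, hLv, hLG⟩ := lemmaS volume hK h0 hbar hGc (fun x _ => by positivity) hG0
  have := case2_b' hk hL hLc M (2 ^ k * volume (S 0))
    (fun w => (measure_mono (show {z : W | (w, z) ∈ L} ⊆ {z : W | (w, z) ∈ K} from fun z hz => hLK hz)).trans (hM w)) (by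
      intro p hp
      calc _ ≤ volume (S p) := by
            refine measure_mono ?_
            rintro u ⟨z, h1, h2⟩
            exact ⟨z, hLK h1, hLK h2⟩
        _ ≤ _ := by
            have h := hLG p hp
            have h' : G p ^ k ≤ (2 * G 0) ^ k := by gcongr
            rw [mul_pow, hG] at h'
            simp only at h'
            rw [Real.rpow_inv_natCast_pow measureReal_nonneg hk0.ne',
              Real.rpow_inv_natCast_pow measureReal_nonneg hk0.ne'] at h'
            rw [← ENNReal.toReal_le_toReal (hScl _).measure_ne_top
              (ENNReal.mul_ne_top (by simp) (hScl _).measure_ne_top), ENNReal.toReal_mul]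
            simpa [Measure.real] using h')
  rw [← hS0]
  refine hLv.trans ?_
  gcongr
  refine this.trans (le_of_eq ?_)
  have e4 : (4 : ℝ≥0∞) ^ k = 2 ^ k * 2 ^ k := by rw [← mul_pow]; norm_num
  rw [e4]; ring

theorem case2_E {k n : ℕ} (hk : Module.finrank ℝ V = k) (hk0 : 0 < k) (hn : Module.finrank ℝ (V × W) = n)
    {L : Set (V × W)} (hL : IsCompact L)
    (hLc : Convex ℝ L) (h0 : (0 : V × W) ∈ interior L) (hbar : ∫ x in L, x = 0) :
    volume (Prod.fst '' L - Prod.fst '' L) ≤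
      ENNReal.ofReal ((128 * n / k) ^ k) * volume {η : V | ∃ ζ : W, (η, ζ) ∈ L ∧ -(η, ζ) ∈ L} := by
  obtain ⟨m, hm⟩ : ∃ m, Module.finrank ℝ W = m := ⟨_, rfl⟩
  have hkn : k ≤ n := by rw [← hk, ← hn, Module.finrank_prod]; omega
  have hmn : m ≤ n := by rw [← hm, ← hn, Module.finrank_prod]; omega
  have hn0 : 0 < n := by omega
  have hk' : (0 : ℝ) < k := by exact_mod_cast hk0
  have hn' : (0 : ℝ) < n := by exact_mod_cast hn0
  have hkn' : (k : ℝ) ≤ n := by exact_mod_cast hkn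
  have hP := hL.image continuous_fst
  set P := Prod.fst '' L with hPdef
  have hPc : Convex ℝ P := hLc.is_linear_image (IsLinearMap.mk (fun _ _ => rfl) (fun _ _ => rfl))
  set T1 := volume {η : V | ∃ ζ : W, (η, ζ) ∈ L ∧ -(η, ζ) ∈ L}
  have hLt : volume L ≠ ⊤ := hL.measure_ne_top
  have hL0 : volume L ≠ 0 := (Measure.measure_pos_of_mem_nhds volume (mem_interior_iff_mem_nhds.1 h0)).ne'
  have hPt : volume P ≠ ⊤ := hP.measure_ne_top
  have hP0 : volume P ≠ 0 := by
    refine (Measure.measure_pos_of_mem_nhds (x := 0) volume ?_).ne'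
    exact isOpenMap_fst.image_mem_nhds (mem_interior_iff_mem_nhds.1 h0)
  have a1 : volume (P - P) ≤ 4 ^ k * volume P := by
    have := rs_lower hk hP hP hPc hPc
    rw [inter_self, ← mul_assoc] at this
    exact (ENNReal.mul_le_mul_iff_left hP0 hPt).1 this
  set c := ENNReal.ofReal (((k : ℝ) / (4 * n)) ^ k) with hcdef
  have hc0 : c ≠ 0 := by
    rw [hcdef, ← pos_iff_ne_zero, ENNReal.ofReal_pos]; positivity
  have hct : c ≠ ⊤ := by simp [hcdef]
  have a2 : ∀ w, volume {z : W | (w, z) ∈ L} ≤ volume L / (c * volume P) := by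
    intro w
    rw [ENNReal.le_div_iff_mul_le (Or.inl (mul_ne_zero hc0 hP0)) (Or.inl (ENNReal.mul_ne_top hct hPt))]
    have he1 : (k : ℝ) / (2 * n) ≤ 1 := by rw [div_le_one (by positivity)]; linarith
    have := case2_a hk hm hL hLc (ε := (k : ℝ) / (2 * n)) (by positivity) he1 w
    refine le_trans ?_ this
    rw [mul_comm, mul_assoc]
    gcongr
    refine ENNReal.ofReal_le_ofReal ?_
    calc ((k : ℝ) / (4 * n)) ^ k = ((k : ℝ) / (2 * n)) ^ k * ((2 : ℝ) ^ k)⁻¹ := by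
          rw [← inv_pow, ← mul_pow]; congr 1; field_simp; ring
      _ ≤ ((k : ℝ) / (2 * n)) ^ k * (1 - (k : ℝ) / (2 * n)) ^ n := by gcongr; exact eps_bound hn0 hkn
      _ ≤ _ := by
          gcongr ((k : ℝ) / (2 * n)) ^ k * ?_
          exact pow_le_pow_of_le_one (by linarith) (by simp; positivity) hmn
  have a3 := case2_b hk hk0 hL hLc h0 hbar _ a2
  have a4 : c * volume P ≤ 2 * (4 ^ k * T1) := by
    refine (ENNReal.mul_le_mul_iff_left hL0 hLt).1 ?_
    calc c * volume P * volume L ≤ c * volume P * (2 * (4 ^ k * (T1 * (volume L / (c * volume P))))) := by gcongr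
      _ = 2 * (4 ^ k * T1) * ((volume L / (c * volume P)) * (c * volume P)) := by ring
      _ = _ := by rw [ENNReal.div_mul_cancel (mul_ne_zero hc0 hP0) (ENNReal.mul_ne_top hct hPt)]
  calc volume (P - P) ≤ 4 ^ k * volume P := a1
    _ = 4 ^ k * (ENNReal.ofReal ((4 * n / (k : ℝ)) ^ k) * (c * volume P)) := by
        rw [← mul_assoc (ENNReal.ofReal _), hcdef, ← ENNReal.ofReal_mul (by positivity), ← mul_pow]
        have : (4 * n / (k : ℝ)) * ((k : ℝ) / (4 * n)) = 1 := by field_simp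
        rw [this]; simp
    _ ≤ 4 ^ k * (ENNReal.ofReal ((4 * n / (k : ℝ)) ^ k) * (2 ^ k * (4 ^ k * T1))) := by
        gcongr 4 ^ k * (ENNReal.ofReal ((4 * n / (k : ℝ)) ^ k) * ?_)
        refine a4.trans ?_
        gcongr
        exact le_self_pow (by norm_num) hk0.ne'
    _ = _ := by
        have e3 : ∀ a : ℕ, ((a : ℝ≥0∞)) ^ k = ENNReal.ofReal ((a : ℝ) ^ k) := fun a => by
          rw [ENNReal.ofReal_pow (by positivity), ENNReal.ofReal_natCast]
        have e4 := e3 4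
        have e2 := e3 2
        push_cast at e4 e2
        rw [e4, e2]
        simp only [← mul_assoc]
        rw [← ENNReal.ofReal_mul (by positivity), ← ENNReal.ofReal_mul (by positivity), ← ENNReal.ofReal_mul (by positivity),
          ← mul_pow, ← mul_pow, ← mul_pow]
        congr 3; ring
end


section
variable {V : Type*} [NormedAddCommGroup V] [InnerProductSpace ℝ V] [FiniteDimensional ℝ V]
    [MeasurableSpace V] [BorelSpace V]

def pol (T : Set V) : Set V := {x | ∀ y ∈ T, ⟪x, y⟫ ≤ 1}

structure SB (T : Set V) : Prop where
  comp : IsCompact T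
  conv : Convex ℝ T
  nh : T ∈ nhds (0 : V)
  sym : ∀ x ∈ T, -x ∈ T

theorem pol_closed (T : Set V) : IsClosed (pol T) := by
  have : pol T = ⋂ y ∈ T, {x | ⟪x, y⟫ ≤ 1} := by ext x; simp [pol]
  rw [this]
  refine isClosed_biInter fun y _ => isClosed_le (by fun_prop) (by fun_prop)

theorem pol_convex (T : Set V) : Convex ℝ (pol T) := by
  intro x hx y hy a b ha hb hab z hz
  have h1 := hx z hz
  have h2 := hy z hz
  rw [inner_add_left, real_inner_smul_left, real_inner_smul_left]
  nlinarith

theorem pol_compact {T : Set V} (h : T ∈ nhds (0 : V)) : IsCompact (pol T) := by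
  obtain ⟨r, hr, hrT⟩ := Metric.nhds_basis_closedBall.mem_iff.1 h
  refine (isCompact_closedBall (0 : V) r⁻¹).of_isClosed_subset (pol_closed T) ?_
  intro x hx
  rw [mem_closedBall_zero_iff]
  by_cases h0 : x = 0
  · simp [h0, hr.le]
  have hx0 : 0 < ‖x‖ := norm_pos_iff.2 h0
  have h1 := hx ((r / ‖x‖) • x) (hrT (by
    rw [mem_closedBall_zero_iff, norm_smul, Real.norm_of_nonneg (by positivity)]
    field_simp; exact le_rfl))
  rw [real_inner_smul_right, real_inner_self_eq_norm_sq] at h1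
  have h2 : r / ‖x‖ * ‖x‖ ^ 2 = r * ‖x‖ := by field_simp
  rw [h2] at h1
  rw [← one_div, le_div_iff₀ hr]; linarith

theorem ball_pol {T : Set V} {R : ℝ} (hR : 0 < R) (h : T ⊆ closedBall 0 R) : closedBall 0 R⁻¹ ⊆ pol T := by
  intro x hx y hy
  have hy' := h hy
  rw [mem_closedBall_zero_iff] at hx hy'
  refine (real_inner_le_norm x y).trans ?_
  calc ‖x‖ * ‖y‖ ≤ R⁻¹ * R := by gcongr
    _ = 1 := by field_simp

theorem pol_nh {T : Set V} (h : IsCompact T) : pol T ∈ nhds (0 : V) := by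
  obtain ⟨R, hR, hb⟩ := h.isBounded.subset_closedBall_lt 0 0
  exact Filter.mem_of_superset (closedBall_mem_nhds 0 (inv_pos.2 hR)) (ball_pol hR hb)

theorem pol_anti {S T : Set V} (h : S ⊆ T) : pol T ⊆ pol S := fun _ hx y hy => hx y (h hy)

theorem zero_pol (T : Set V) : (0 : V) ∈ pol T := fun y _ => by simp

theorem bipol {T : Set V} (h1 : IsClosed T) (h2 : Convex ℝ T) (h0 : (0 : V) ∈ T) : pol (pol T) = T := by
  apply Subset.antisymm
  · intro x hx
    by_contra hc
    obtain ⟨f, u, hu, hux⟩ := geometric_hahn_banach_closed_point h2 h1 hc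
    have hu0 : 0 < u := by simpa using hu 0 h0
    set y := (InnerProductSpace.toDual ℝ V).symm f
    have hy : ∀ z, ⟪y, z⟫ = f z := fun z => InnerProductSpace.toDual_symm_apply
    have := hx (u⁻¹ • y) (by
      intro z hz
      rw [real_inner_smul_left, hy, inv_mul_le_iff₀ hu0]
      linarith [hu z hz])
    rw [real_inner_comm, real_inner_smul_left, hy, inv_mul_le_iff₀ hu0] at this
    linarith
  · intro x hx y hy
    rw [real_inner_comm]
    exact hy x hx

theorem SB.zero {T : Set V} (h : SB T) : (0 : V) ∈ T := mem_of_mem_nhds h.nh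

theorem SB.pol {T : Set V} (h : SB T) : SB (pol T) :=
  ⟨pol_compact h.nh, pol_convex T, pol_nh h.comp, fun x hx y hy => by
    have := hx (-y) (h.sym y hy)
    simpa using this⟩

theorem SB.inter {S T : Set V} (hS : SB S) (hT : SB T) : SB (S ∩ T) :=
  ⟨hS.comp.inter hT.comp, hS.conv.inter hT.conv, Filter.inter_mem hS.nh hT.nh,
    fun x hx => ⟨hS.sym x hx.1, hT.sym x hx.2⟩⟩

theorem SB.pol_inter {T : Set V} (h : SB T) : _root_.pol (T ∩ _root_.pol T) ⊆ T - _root_.pol T := by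
  have hS : IsCompact (T - _root_.pol T) := isCompact_sub' h.comp h.pol.comp
  have hSc : Convex ℝ (T - _root_.pol T) := h.conv.sub h.pol.conv
  have hS0 : (0 : V) ∈ T - _root_.pol T := ⟨0, h.zero, 0, zero_pol T, by simp⟩
  rw [← bipol hS.isClosed hSc hS0]
  refine pol_anti ?_
  intro y hy
  constructor
  · rw [← bipol h.comp.isClosed h.conv h.zero]
    intro z hz
    exact hy z ⟨0, h.zero, -z, h.pol.sym z hz, by simp⟩
  · intro z hz
    exact hy z ⟨z, hz, 0, zero_pol T, by simp⟩

theorem SB.sub_sub {T : Set V} (h : SB T) : T - _root_.pol T ⊆ (2 : ℝ) • _root_.pol (T ∩ _root_.pol T) := by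
  rintro _ ⟨t, ht, s, hs, rfl⟩
  refine ⟨(2⁻¹ : ℝ) • (t - s), ?_, by simp⟩
  rintro z ⟨hz, hz'⟩
  have h1 := hz' t ht
  have h2 := h.pol.sym s hs z hz
  rw [real_inner_comm] at h1
  rw [real_inner_smul_left, inner_sub_left]
  rw [inner_neg_left] at h2
  linarith

def Pr (T : Set V) : ℝ≥0∞ := volume T * volume (pol T)

theorem Pr_lower {k : ℕ} (hk : Module.finrank ℝ V = k) {T : Set V} (h : SB T) :
    Pr (T ∩ pol T) ≤ 4 ^ k * Pr T := by
  refine le_trans ?_ (rs_lower hk h.comp h.pol.comp h.conv h.pol.conv)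
  rw [Pr, mul_comm]
  gcongr
  exact h.pol_inter

theorem Pr_upper {k : ℕ} (hk : Module.finrank ℝ V = k) {T : Set V} (h : SB T) :
    Pr T ≤ 2 ^ k * Pr (T ∩ pol T) := by
  refine (rs_upper h.comp h.pol.comp h.conv h.pol.conv h.sym h.pol.sym).trans ?_
  calc _ ≤ volume ((2 : ℝ) • pol (T ∩ pol T)) * volume (T ∩ pol T) := by
        gcongr; exact h.sub_sub
    _ = _ := by
        rw [Measure.addHaar_smul, hk, Pr, abs_of_nonneg (by positivity), ENNReal.ofReal_pow (by positivity)]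
        simp only [ENNReal.ofReal_ofNat]
        ring

theorem det_adj (f : V →ₗ[ℝ] V) : LinearMap.det (LinearMap.adjoint f) = LinearMap.det f := by
  set b := stdOrthonormalBasis ℝ V
  rw [← LinearMap.det_toMatrix b.toBasis, ← LinearMap.det_toMatrix b.toBasis f, LinearMap.toMatrix_adjoint,
    Matrix.det_conjTranspose]
  simp

theorem pol_image (f : V →ₗ[ℝ] V) (T : Set V) : pol (f '' T) = LinearMap.adjoint f ⁻¹' pol T := by
  ext x
  simp only [pol, mem_ofPred_eq, forall_mem_image, mem_preimage, LinearMap.adjoint_inner_left]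

theorem Pr_image (f : V →ₗ[ℝ] V) (hf : LinearMap.det f ≠ 0) (T : Set V) : Pr (f '' T) = Pr T := by
  rw [Pr, pol_image, Measure.addHaar_image_linearMap, Measure.addHaar_preimage_linearMap _ (by rwa [det_adj]),
    det_adj, Pr, abs_inv, ENNReal.ofReal_inv_of_pos (abs_pos.2 hf)]
  have h1 : ENNReal.ofReal |LinearMap.det f| ≠ 0 := by simp [hf]
  calc _ = (ENNReal.ofReal |LinearMap.det f| * (ENNReal.ofReal |LinearMap.det f|)⁻¹) * (volume T * volume (pol T)) := by
        ring
    _ = _ := by rw [ENNReal.mul_inv_cancel h1 (by simp), one_mul]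

theorem SB.image {T : Set V} (h : SB T) (f : V →ₗ[ℝ] V) (hf : LinearMap.det f ≠ 0) : SB (f '' T) := by
  refine ⟨h.comp.image (LinearMap.continuous_of_finiteDimensional f), h.conv.linear_image f, ?_, ?_⟩
  · have hs : Function.Surjective f := (LinearMap.equivOfDetNeZero f hf).surjective
    have := (LinearMap.isOpenMap_of_finiteDimensional f hs).image_mem_nhds h.nh
    simpa using this
  · rintro _ ⟨x, hx, rfl⟩
    exact ⟨-x, h.sym x hx, by simp⟩

theorem Pr_ind {k : ℕ} (hk : Module.finrank ℝ V = k) (j : ℕ) : ∀ T : Set V, SB T →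
    closedBall 0 ((2 : ℝ) ^ (2 ^ j))⁻¹ ⊆ T → T ⊆ closedBall 0 ((2 : ℝ) ^ (2 ^ j)) →
    Pr T ≤ (4 * 2 ^ j) ^ k * volume (closedBall (0 : V) 1) ^ 2 ∧
    volume (closedBall (0 : V) 1) ^ 2 ≤ (4 * 4 ^ j) ^ k * Pr T := by
  induction j with
  | zero =>
    intro T hT h1 h2
    simp only [pow_zero, pow_one, mul_one] at h1 h2 ⊢
    have h3 : pol T ⊆ closedBall 0 2 := by
      have h4 := pol_anti h1
      refine h4.trans ?_
      intro x hx
      by_contra hc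
      rw [mem_closedBall_zero_iff, not_le] at hc
      have := hx ((2⁻¹ / ‖x‖) • x) (by
        rw [mem_closedBall_zero_iff, norm_smul, Real.norm_of_nonneg (by positivity)]
        have : 0 < ‖x‖ := by linarith
        field_simp; exact le_rfl)
      rw [real_inner_smul_right, real_inner_self_eq_norm_sq] at this
      have hh : 2⁻¹ / ‖x‖ * ‖x‖ ^ 2 = 2⁻¹ * ‖x‖ := by field_simp
      linarith
    have h4 := ball_pol (by norm_num) h2
    have e1 : volume (closedBall (0 : V) 2) = 2 ^ k * volume (closedBall (0 : V) 1) := by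
      rw [Measure.addHaar_closedBall' _ _ (by norm_num), hk, ENNReal.ofReal_pow (by norm_num)]; simp
    have e2 : 2 ^ k * volume (closedBall (0 : V) 2⁻¹) = volume (closedBall (0 : V) 1) := by
      rw [Measure.addHaar_closedBall' _ _ (by norm_num), hk, ENNReal.ofReal_pow (by norm_num), ← mul_assoc,
        ← mul_pow]
      have : (2 : ℝ≥0∞) * ENNReal.ofReal 2⁻¹ = 1 := by
        rw [ENNReal.ofReal_inv_of_pos (by norm_num)]
        simp only [ENNReal.ofReal_ofNat]
        exact ENNReal.mul_inv_cancel (by norm_num) (by norm_num)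
      rw [this]; simp
    have e4 : (4 : ℝ≥0∞) ^ k = 2 ^ k * 2 ^ k := by rw [← mul_pow]; norm_num
    constructor
    · calc Pr T ≤ volume (closedBall (0 : V) 2) * volume (closedBall (0 : V) 2) := by
            unfold Pr; gcongr
        _ = _ := by rw [e1, e4]; ring
    · calc _ = 4 ^ k * (volume (closedBall (0 : V) 2⁻¹) * volume (closedBall (0 : V) 2⁻¹)) := by
            rw [← e2, e4]; ring
        _ ≤ _ := by unfold Pr; gcongr
  | succ j ih =>
    intro T hT h1 h2
    set R : ℝ := (2 : ℝ) ^ (2 ^ j) with hR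
    have hR0 : 0 < R := by positivity
    have hRR : (2 : ℝ) ^ (2 ^ (j + 1)) = R * R := by rw [hR, pow_succ 2 j, pow_mul, sq]
    rw [hRR] at h1 h2
    have hS := hT.inter hT.pol
    set f : V →ₗ[ℝ] V := R • (1 : V →ₗ[ℝ] V) with hf
    have hdet : LinearMap.det f ≠ 0 := by
      simp only [f, LinearMap.det_smul, Ne, map_one, mul_one]
      positivity
    have hfx : ∀ x, f x = R • x := fun x => by simp [f]
    have key := ih (f '' (T ∩ pol T)) (hS.image f hdet) (by
        intro x hx
        rw [mem_closedBall_zero_iff] at hx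
        have hy : R⁻¹ • x ∈ closedBall (0 : V) (R * R)⁻¹ := by
          rw [mem_closedBall_zero_iff, norm_smul, Real.norm_of_nonneg (by positivity), mul_inv]
          gcongr
        exact ⟨R⁻¹ • x, ⟨h1 hy, ball_pol (by positivity) h2 hy⟩, by rw [hfx, smul_inv_smul₀ hR0.ne']⟩) (by
        rintro _ ⟨x, ⟨hx1, hx2⟩, rfl⟩
        have := hx2 x hx1
        rw [real_inner_self_eq_norm_sq] at this
        have h3 : ‖x‖ ≤ 1 := by nlinarith [norm_nonneg x]
        rw [mem_closedBall_zero_iff, hfx, norm_smul, Real.norm_of_nonneg hR0.le]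
        nlinarith)
    rw [Pr_image f hdet] at key
    constructor
    · calc Pr T ≤ 2 ^ k * Pr (T ∩ pol T) := Pr_upper hk hT
        _ ≤ 2 ^ k * ((4 * 2 ^ j) ^ k * volume (closedBall (0 : V) 1) ^ 2) := by gcongr; exact key.1
        _ = _ := by rw [← mul_assoc, ← mul_pow]; congr 2; ring
    · calc _ ≤ _ := key.2
        _ ≤ (4 * 4 ^ j) ^ k * (4 ^ k * Pr T) := by gcongr; exact Pr_lower hk hT
        _ = _ := by rw [← mul_assoc, ← mul_pow]; congr 2; ring

end


section
variable {V : Type*} [NormedAddCommGroup V] [InnerProductSpace ℝ V] [FiniteDimensional ℝ V]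
    [MeasurableSpace V] [BorelSpace V]

theorem det_update {ι : Type*} [Fintype ι] [DecidableEq ι] (b : Module.Basis ι ℝ V) (i : ι) (x : V) :
    b.det (Function.update b i x) = b.repr x i := by
  conv_lhs => rw [← b.sum_repr x]
  rw [AlternatingMap.map_update_sum, Finset.sum_eq_single i]
  · rw [AlternatingMap.map_update_smul, Function.update_eq_self, b.det_self]; simp
  · intro j _ hj
    rw [AlternatingMap.map_update_smul, AlternatingMap.map_update_self _ _ hj.symm, smul_zero]
  · simp

theorem auerbach {k : ℕ} (hk : Module.finrank ℝ V = k) {T : Set V} (h : SB T) :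
    ∃ b : Module.Basis (Fin k) ℝ V, (∀ i, b i ∈ T) ∧ ∀ x ∈ T, ∀ i, |b.repr x i| ≤ 1 := by
  have e : Module.Basis (Fin k) ℝ V := Module.finBasisOfFinrankEq ℝ V hk
  have hdc : Continuous fun v : Fin k → V => e.det v := by
    have : ∀ v : Fin k → V, e.det v = Matrix.det (Matrix.of fun i j => e.repr (v j) i) := by
      intro v; rw [Module.Basis.det_apply]; rfl
    simp_rw [this]
    refine Continuous.matrix_det ?_
    refine continuous_matrix fun i j => ?_
    have hl : Continuous (e.coord i) := LinearMap.continuous_of_finiteDimensional _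
    exact hl.comp (continuous_apply j)
  obtain ⟨v, hv, hmax⟩ := (isCompact_univ_pi (fun _ : Fin k => h.comp)).exists_isMaxOn
    ⟨0, fun i _ => h.zero⟩ (f := fun v => |e.det v|) hdc.abs.continuousOn
  have hne : e.det v ≠ 0 := by
    have : Filter.Tendsto (fun t : ℝ => fun i => t • e i) (nhds 0) (nhds (0 : Fin k → V)) := by
      have hc : Continuous (fun t : ℝ => fun i => t • e i) := by fun_prop
      have := hc.tendsto 0
      simpa [Pi.zero_def] using this
    have hT : (univ.pi fun _ : Fin k => T) ∈ nhds (0 : Fin k → V) :=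
      set_pi_mem_nhds finite_univ fun i _ => h.nh
    have h1 := this.eventually hT
    obtain ⟨r, hr, hb⟩ := Metric.eventually_nhds_iff_ball.1 h1
    have h2 := hmax (hb (r / 2) (by simp [abs_of_pos hr, hr]))
    intro h0
    simp only [mem_ofPred_eq, h0, abs_zero] at h2
    have h3 : e.det (fun i => (r / 2) • e i) = (r / 2) ^ k := by
      rw [AlternatingMap.map_smul_univ]
      have : e.det (fun i => e i) = 1 := e.det_self
      simp [this, div_pow]
    rw [h3] at h2
    have : 0 < |(r / 2) ^ k| := by positivity
    linarith
  have hb := (Module.Basis.is_basis_iff_det e).2 (isUnit_iff_ne_zero.2 hne)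
  set b := Module.Basis.mk hb.1 hb.2.ge with hbdef
  have hbv : ⇑b = v := Module.Basis.coe_mk _ _
  refine ⟨b, fun i => by rw [hbv]; exact hv i (mem_univ _), fun x hx i => ?_⟩
  have h1 := hmax (show Function.update v i x ∈ univ.pi fun _ : Fin k => T from by
    intro j _
    by_cases hj : j = i
    · subst hj; simpa using hx
    · simpa [hj] using hv j (mem_univ _))
  simp only [mem_ofPred_eq] at h1
  have h2 := congrArg (fun f => f (Function.update v i x)) (AlternatingMap.eq_smul_basis_det b e.det)
  simp only [AlternatingMap.smul_apply, smul_eq_mul] at h2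
  rw [h2] at h1
  rw [← hbv, det_update, hbv, abs_mul] at h1
  have h3 : 0 < |e.det v| := abs_pos.2 hne
  nlinarith

theorem position {k : ℕ} (hk : Module.finrank ℝ V = k) (hk0 : 0 < k) {T : Set V} (h : SB T) :
    ∃ f : V →ₗ[ℝ] V, LinearMap.det f ≠ 0 ∧ closedBall 0 (k : ℝ)⁻¹ ⊆ f '' T ∧ f '' T ⊆ closedBall 0 (k : ℝ) := by
  obtain ⟨b, hb, hbT⟩ := auerbach hk h
  set o := (stdOrthonormalBasis ℝ V).reindex (finCongr hk)
  have hk' : (0 : ℝ) < k := by exact_mod_cast hk0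
  set f : V ≃ₗ[ℝ] V := b.equiv o.toBasis (Equiv.refl _) with hf
  have hfb : ∀ i, f (b i) = o i := fun i => by simp [hf]
  refine ⟨f, (LinearEquiv.isUnit_det' f).ne_zero, ?_, ?_⟩
  · intro y hy
    rw [mem_closedBall_zero_iff] at hy
    refine ⟨f.symm y, ?_, by simp⟩
    have h1 : f.symm y = ∑ i, (k : ℝ)⁻¹ • ((k * ⟪o i, y⟫) • b i) := by
      rw [LinearEquiv.symm_apply_eq, map_sum]
      conv_lhs => rw [← o.sum_repr y]
      refine Finset.sum_congr rfl fun i _ => ?_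
      rw [map_smul, map_smul, hfb, smul_smul, o.repr_apply_apply]
      congr 1; field_simp
    rw [h1]
    refine h.conv.sum_mem (fun _ _ => by positivity) (by simp; field_simp) fun i _ => ?_
    have h2 : |k * ⟪o i, y⟫| ≤ 1 := by
      rw [abs_mul, abs_of_pos hk']
      have := abs_real_inner_le_norm (o i) y
      rw [o.norm_eq_one, one_mul] at this
      calc (k : ℝ) * |⟪o i, y⟫| ≤ k * (k : ℝ)⁻¹ := by gcongr; linarith
        _ = 1 := by field_simp
    rw [abs_le] at h2
    set c := k * ⟪o i, y⟫
    have h3 : c • b i = ((1 + c) / 2) • b i + ((1 - c) / 2) • (-b i) := by module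
    rw [h3]
    exact h.conv (hb i) (h.sym _ (hb i)) (by linarith) (by linarith) (by ring)
  · rintro _ ⟨x, hx, rfl⟩
    rw [mem_closedBall_zero_iff]
    have h1 : f x = ∑ i, b.repr x i • o i := by
      conv_lhs => rw [← b.sum_repr x]
      rw [map_sum]
      refine Finset.sum_congr rfl fun i _ => ?_
      rw [map_smul, hfb]
    simp only [LinearEquiv.coe_coe]
    rw [h1]
    refine (norm_sum_le _ _).trans ?_
    calc _ ≤ ∑ i : Fin k, (1 : ℝ) := by
          refine Finset.sum_le_sum fun i _ => ?_
          rw [norm_smul, o.norm_eq_one, mul_one]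
          exact hbT x hx i
      _ = k := by simp

theorem Pr_bound {k : ℕ} (hk : Module.finrank ℝ V = k) (hk0 : 0 < k) {j : ℕ} (hj : k ≤ 2 ^ (2 ^ j)) {T : Set V}
    (h : SB T) : Pr T ≤ (4 * 2 ^ j) ^ k * volume (closedBall (0 : V) 1) ^ 2 ∧
    volume (closedBall (0 : V) 1) ^ 2 ≤ (4 * 4 ^ j) ^ k * Pr T := by
  obtain ⟨f, hf, h1, h2⟩ := position hk hk0 h
  have hj' : (k : ℝ) ≤ 2 ^ (2 ^ j) := by exact_mod_cast hj
  have := Pr_ind hk j (f '' T) (h.image f hf)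
    ((closedBall_subset_closedBall (by gcongr)).trans h1) (h2.trans (closedBall_subset_closedBall hj'))
  rwa [Pr_image f hf] at this

end


section
variable {V : Type*} [NormedAddCommGroup V] [InnerProductSpace ℝ V] [FiniteDimensional ℝ V]
    [MeasurableSpace V] [BorelSpace V]
variable {W : Type*} [NormedAddCommGroup W] [InnerProductSpace ℝ W] [FiniteDimensional ℝ W]
    [MeasurableSpace W] [BorelSpace W]
variable {E : Type*} [NormedAddCommGroup E] [InnerProductSpace ℝ E] [FiniteDimensional ℝ E]
    [MeasurableSpace E] [BorelSpace E]

theorem caseB {k n : ℕ} (hk : Module.finrank ℝ V = k) (hk0 : 0 < k) (hn : Module.finrank ℝ (V × W) = n)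
    {j : ℕ} (hj : k ≤ 2 ^ (2 ^ j)) {L : Set (V × W)} (hL : IsCompact L)
    (hLc : Convex ℝ L) (h0 : (0 : V × W) ∈ interior L) (hbar : ∫ x in L, x = 0)
    {O I : Set V} (hO : ∀ u ∈ O, ∀ q ∈ L, -q ∈ L → ⟪u, q.1⟫ ≤ 1)
    (hI : ∀ u, (∀ q ∈ L, ⟪u, q.1⟫ ≤ 1) → (∀ q ∈ L, ⟪-u, q.1⟫ ≤ 1) → u ∈ I) :
    volume O ≤ ENNReal.ofReal ((128 * n / k) ^ k) * (16 * 8 ^ j) ^ k * volume I := by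
  have main := case2_E hk hk0 hn hL hLc h0 hbar
  have h0' := mem_interior_iff_mem_nhds.1 h0
  set P := Prod.fst '' L with hP
  set T1 := {η : V | ∃ ζ : W, (η, ζ) ∈ L ∧ -(η, ζ) ∈ L} with hT1
  have e1 : T1 = Prod.fst '' (L ∩ -L) := by
    ext η
    constructor
    · rintro ⟨ζ, h1, h2⟩; exact ⟨(η, ζ), ⟨h1, h2⟩, rfl⟩
    · rintro ⟨⟨a, b⟩, ⟨h1, h2⟩, rfl⟩; exact ⟨b, h1, h2⟩
  have hlin : IsLinearMap ℝ (Prod.fst : V × W → V) := IsLinearMap.mk (fun _ _ => rfl) (fun _ _ => rfl)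
  have hneg : -L ∈ nhds (0 : V × W) := by
    have := (continuous_neg (G := V × W)).continuousAt.preimage_mem_nhds (x := 0) (t := L) (by simpa using h0')
    simpa using this
  have S1 : SB T1 := by
    rw [e1]
    refine ⟨(hL.inter hL.neg).image continuous_fst, (hLc.inter hLc.neg).is_linear_image hlin, ?_, ?_⟩
    · exact isOpenMap_fst.image_mem_nhds (Filter.inter_mem h0' hneg)
    · rintro _ ⟨q, ⟨h1, h2⟩, rfl⟩
      exact ⟨-q, ⟨h2, by simpa using h1⟩, rfl⟩
  have hPn : P ∈ nhds (0 : V) := isOpenMap_fst.image_mem_nhds h0'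
  have hPc : IsCompact P := hL.image continuous_fst
  have hPv : Convex ℝ P := hLc.is_linear_image hlin
  have hP0 : (0 : V) ∈ P := mem_of_mem_nhds hPn
  have hPT : P ⊆ P - P := fun x hx => ⟨x, hx, 0, hP0, by simp⟩
  have S2 : SB (P - P) := by
    refine ⟨isCompact_sub' hPc hPc, hPv.sub hPv, Filter.mem_of_superset hPn hPT, ?_⟩
    rintro _ ⟨a, ha, b, hb, rfl⟩
    exact ⟨b, hb, a, ha, by simp⟩
  have iO : O ⊆ pol T1 := by
    rintro u hu η ⟨ζ, h1, h2⟩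
    exact hO u hu (η, ζ) h1 h2
  have iI : pol (P - P) ⊆ I := by
    intro u hu
    refine hI u (fun q hq => hu _ (hPT ⟨q, hq, rfl⟩)) (fun q hq => S2.pol.sym u hu _ (hPT ⟨q, hq, rfl⟩))
  have b1 := (Pr_bound hk hk0 hj S1).1
  have b2 := (Pr_bound hk hk0 hj S2).2
  have n0 : volume T1 ≠ 0 := (Measure.measure_pos_of_mem_nhds volume S1.nh).ne'
  have nt : volume T1 ≠ ⊤ := S1.comp.measure_ne_top
  refine (ENNReal.mul_le_mul_iff_left n0 nt).1 ?_
  calc volume O * volume T1 ≤ volume (pol T1) * volume T1 := by gcongr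
    _ = Pr T1 := by rw [Pr, mul_comm]
    _ ≤ (4 * 2 ^ j) ^ k * volume (closedBall (0 : V) 1) ^ 2 := b1
    _ ≤ (4 * 2 ^ j) ^ k * ((4 * 4 ^ j) ^ k * (volume (P - P) * volume (pol (P - P)))) := by
        gcongr; exact b2
    _ ≤ (4 * 2 ^ j) ^ k * ((4 * 4 ^ j) ^ k * ((ENNReal.ofReal ((128 * n / k) ^ k) * volume T1) * volume I)) := by
        gcongr
    _ = _ := by
        have e : (16 * 8 ^ j : ℝ≥0∞) ^ k = (4 * 2 ^ j) ^ k * (4 * 4 ^ j) ^ k := by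
          rw [← mul_pow]
          congr 1
          have : (8 : ℝ≥0∞) ^ j = 2 ^ j * 4 ^ j := by rw [← mul_pow]; norm_num
          rw [this]; ring
        rw [e]; ring

theorem core {k n : ℕ} (hk : Module.finrank ℝ V = k) (hk0 : 0 < k) (hn : Module.finrank ℝ (V × W) = n)
    {j : ℕ} (hj : k ≤ 2 ^ (2 ^ j)) (φ : E ≃L[ℝ] V × W) (hφ : MeasurePreserving φ)
    (hin : ∀ x y, ⟪x, y⟫ = ⟪(φ x).1, (φ y).1⟫ + ⟪(φ x).2, (φ y).2⟫)
    {K : Set E} (hK : IsCompact K) (hKc : Convex ℝ K) (h0 : (0 : E) ∈ interior K)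
    (hbar : (∫ x in K, x) = 0 ∨ (∫ x in pol K, x) = 0) :
    volume {u : V | φ.symm (u, 0) ∈ convexHull ℝ (K ∪ -K)} ≤
      ENNReal.ofReal ((128 * n / k) ^ k) * (16 * 8 ^ j) ^ k * volume {u : V | φ.symm (u, 0) ∈ K ∩ -K} := by
  have hn0 := mem_interior_iff_mem_nhds.1 h0
  have hz : (0 : E) ∈ K := interior_subset h0
  have hemb : MeasurableEmbedding φ := φ.toHomeomorph.measurableEmbedding
  have him : ∀ S : Set E, S ∈ nhds 0 → (0 : V × W) ∈ interior (φ '' S) := by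
    intro S hS
    rw [mem_interior_iff_mem_nhds]
    have := φ.toHomeomorph.isOpenMap.image_mem_nhds hS
    simpa using this
  have hint : ∀ S : Set E, (∫ x in S, x) = 0 → ∫ x in φ '' S, x = 0 := by
    intro S hS
    rw [hφ.setIntegral_image_emb hemb]
    rw [φ.integral_comp_comm (fun x => x), hS, map_zero]
  rcases hbar with hb | hb
  · have := case1 hk hk0 hn (hK.image φ.continuous) (hKc.linear_image φ.toLinearMap) (him K hn0) (hint K hb)
    have hsub : convexHull ℝ (K ∪ -K) ⊆ K - K := by
      refine convexHull_min ?_ (hKc.sub hKc)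
      rintro x (hx | hx)
      · exact ⟨x, hx, 0, hz, by simp⟩
      · exact ⟨0, hz, -x, hx, by simp⟩
    calc _ ≤ volume {u : V | (u, (0 : W)) ∈ φ '' K - φ '' K} := by
          refine measure_mono ?_
          intro u hu
          obtain ⟨a, ha, b, hb, hab⟩ := hsub hu
          refine ⟨φ a, ⟨a, ha, rfl⟩, φ b, ⟨b, hb, rfl⟩, ?_⟩
          have := congrArg φ hab
          simpa using this
      _ ≤ _ := this
      _ ≤ _ := by
          rw [mul_assoc]
          gcongr ENNReal.ofReal ((128 * n / k) ^ k) * ?_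
          have h1 : (1 : ℝ≥0∞) ≤ (16 * 8 ^ j) ^ k := by
            refine one_le_pow₀ (one_le_mul (by norm_num) (one_le_pow₀ (by norm_num)))
          refine le_trans ?_ (le_mul_of_one_le_left (zero_le) h1)
          refine measure_mono ?_
          rintro u ⟨⟨a, ha, hau⟩, ⟨b, hb, hbu⟩⟩
          have ea : φ.symm (u, 0) = a := by rw [← hau]; simp
          have eb : φ.symm (u, 0) = -b := by
            have : ((u, 0) : V × W) = -φ b := by
              have : φ b = (-u, 0) := hbu
              rw [this]; simp
            rw [this]; simp
          refine ⟨?_, ?_⟩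
          · rw [ea]; exact ha
          · rw [eb]; simpa using hb
  · have hq : ∀ (u : V) (q : E), ⟪u, (φ q).1⟫ = ⟪φ.symm (u, 0), q⟫ := by
      intro u q; rw [hin]; simp
    have hbi := bipol hK.isClosed hKc hz
    refine caseB hk hk0 hn hj ((pol_compact hn0).image φ.continuous) ((pol_convex K).linear_image φ.toLinearMap)
      (him _ (pol_nh hK)) (hint _ hb) ?_ ?_
    · rintro u hu _ ⟨q, hq1, rfl⟩ hq2
      have hq2 : -q ∈ pol K := by
        obtain ⟨q', h1, h2⟩ := hq2
        rw [← map_neg] at h2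
        rwa [← φ.injective h2]
      rw [hq]
      have hsub : convexHull ℝ (K ∪ -K) ⊆ {x | ⟪x, q⟫ ≤ 1} := by
        refine convexHull_min ?_ ?_
        · rintro x (hx | hx)
          · have := hq1 x hx
            rwa [real_inner_comm] at this
          · have := hq2 (-x) hx
            rw [inner_neg_neg, real_inner_comm] at this
            exact this
        · intro x hx y hy a b ha hb hab
          simp only [mem_ofPred_eq] at *
          rw [inner_add_left, real_inner_smul_left, real_inner_smul_left]
          nlinarith
      exact hsub hu
    · intro u h1 h2
      constructor
      · rw [← hbi]
        intro q hq'
        rw [← hq]; exact h1 _ ⟨q, hq', rfl⟩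
      · rw [mem_neg, ← hbi]
        intro q hq'
        have := h2 _ ⟨q, hq', rfl⟩
        rw [inner_neg_left, hq] at this
        rwa [inner_neg_left]

end

theorem exists_j {n : ℕ} (hn : 2 ≤ n) : ∃ j : ℕ, n ≤ 2 ^ (2 ^ j) ∧ (8 : ℝ) ^ j ≤ 512 * (Real.log n) ^ 3 := by
  set m := Nat.clog 2 n with hm
  have hm1 : n ≤ 2 ^ m := Nat.le_pow_clog (by norm_num) n
  have hm0 : 0 < m := Nat.clog_pos (by norm_num) hn
  set j := Nat.clog 2 m with hj
  have hj1 : m ≤ 2 ^ j := Nat.le_pow_clog (by norm_num) m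
  have hj2 : 2 ^ j ≤ 2 * m := by
    rcases Nat.eq_zero_or_pos j with h | h
    · rw [h]; omega
    · have : 2 ^ (j - 1) < m := by
        by_contra hc
        push Not at hc
        have := (Nat.clog_le_iff_le_pow (by norm_num)).2 hc
        omega
      have e : 2 ^ j = 2 * 2 ^ (j - 1) := by rw [← pow_succ']; congr 1; omega
      omega
  have hm2 : 2 ^ (m - 1) < n := by
    by_contra hc
    push Not at hc
    have := (Nat.clog_le_iff_le_pow (by norm_num)).2 hc
    omega
  refine ⟨j, hm1.trans (Nat.pow_le_pow_right (by norm_num) hj1), ?_⟩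
  have l2 : (1 : ℝ) / 2 ≤ Real.log 2 := by have := Real.log_two_gt_d9; linarith
  have l1 : Real.log 2 ≤ Real.log n := Real.log_le_log (by norm_num) (by exact_mod_cast hn)
  have l3 : ((m : ℝ) - 1) * Real.log 2 ≤ Real.log n := by
    have h : ((2 : ℝ) ^ (m - 1)) ≤ n := by exact_mod_cast hm2.le
    have := Real.log_le_log (by positivity) h
    rw [Real.log_pow, Nat.cast_sub hm0] at this
    simpa using this
  have hm3 : (m : ℝ) ≤ 4 * Real.log n := by
    have : (1 : ℝ) ≤ m := by exact_mod_cast hm0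
    nlinarith
  have h2 : (2 : ℝ) ^ j ≤ 8 * Real.log n := by
    have : (2 : ℝ) ^ j ≤ 2 * m := by exact_mod_cast hj2
    linarith
  calc (8 : ℝ) ^ j = ((2 : ℝ) ^ j) ^ 3 := by rw [← pow_mul, mul_comm, pow_mul]; norm_num
    _ ≤ (8 * Real.log n) ^ 3 := by gcongr
    _ = _ := by ring

theorem haus {n k : ℕ} (hk0 : 0 < k) (H : Submodule ℝ (EuclideanSpace ℝ (Fin n))) (hH : Module.finrank ℝ H = k)
    {c : ℝ≥0∞} {A B : Set (EuclideanSpace ℝ (Fin n))}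
    (h : (measureSpaceOfInnerProductSpace : MeasureSpace H).volume {u : H | (u : EuclideanSpace ℝ (Fin n)) ∈ A} ≤
      c ^ k * (measureSpaceOfInnerProductSpace : MeasureSpace H).volume {u : H | (u : EuclideanSpace ℝ (Fin n)) ∈ B}) :
    vrad k H (A ∩ H) ≤ c * vrad k H (B ∩ H) := by
  have e : ∀ S : Set (EuclideanSpace ℝ (Fin n)), μH[(k : ℝ)] (S ∩ H) =
      μH[(k : ℝ)] {u : H | (u : EuclideanSpace ℝ (Fin n)) ∈ S} := by
    intro S
    rw [← (isometry_subtype_coe (s := (H : Set (EuclideanSpace ℝ (Fin n))))).hausdorffMeasure_image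
      (Or.inl (by positivity))]
    congr 1
    ext x
    simp [and_comm]
  have hm : μH[(k : ℝ)] (A ∩ H) ≤ c ^ k * μH[(k : ℝ)] (B ∩ H) := by
    rw [e, e]
    have : (μH[(k : ℝ)] : Measure H).IsAddHaarMeasure := by
      rw [← hH]; exact isAddHaarMeasure_hausdorffMeasure
    rw [Measure.isAddLeftInvariant_eq_smul (μH[(k : ℝ)] : Measure H) (measureSpaceOfInnerProductSpace : MeasureSpace H).volume]
    simp only [Measure.smul_apply, ENNReal.smul_def, smul_eq_mul]
    rw [mul_left_comm]
    gcongr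
  have hk' : (0 : ℝ) < k := by exact_mod_cast hk0
  unfold vrad
  calc _ ≤ (c ^ k * (μH[(k : ℝ)] (B ∩ H) /
        μH[(k : ℝ)] (closedBall (0 : EuclideanSpace ℝ (Fin n)) 1 ∩ (H : Set _)))) ^ ((k : ℝ)⁻¹) := by
        refine ENNReal.rpow_le_rpow ?_ (by positivity)
        rw [← mul_div_assoc]
        gcongr
    _ = _ := by
        rw [ENNReal.mul_rpow_of_nonneg _ _ (by positivity), ← ENNReal.rpow_natCast, ← ENNReal.rpow_mul,
          mul_inv_cancel₀ hk'.ne', ENNReal.rpow_one]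

/-- Theorem (sections of the outer and inner regularizations): for a convex body `K` with
barycenter of `K` or of `K°` at the origin,
`vrad(K_out ∩ H) ≤ (n/k)·C·(log n)³ · vrad(K_in ∩ H)`. -/
theorem stmt1 :
    ∃ C : ℝ, 0 < C ∧ ∀ (n : ℕ), 2 ≤ n →
      ∀ K : Set (EuclideanSpace ℝ (Fin n)),
        IsCompact K → Convex ℝ K → (0 : EuclideanSpace ℝ (Fin n)) ∈ interior K →
        ((∫ x in K, x) = 0 ∨ (∫ x in polarBody K, x) = 0) →
        ∀ k : ℕ, 1 ≤ k → k ≤ n - 1 →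
          ∀ H : Submodule ℝ (EuclideanSpace ℝ (Fin n)), Module.finrank ℝ H = k →
            vrad k H (convexHull ℝ (K ∪ -K) ∩ (H : Set _)) ≤
              ENNReal.ofReal (((n : ℝ) / k) * C * (Real.log n) ^ 3) *
                vrad k H ((K ∩ -K) ∩ (H : Set _)) := by
  refine ⟨128 * 16 * 512, by norm_num, ?_⟩
  intro n hn K hK hKc h0 hbar k hk1 hkn H hH
  obtain ⟨j, hj1, hj2⟩ := exists_j hn
  have hk' : (0 : ℝ) < k := by exact_mod_cast hk1
  have l1 : 0 ≤ Real.log n := Real.log_natCast_nonneg n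
  set Φ := H.orthogonalDecomposition
  set φ : EuclideanSpace ℝ (Fin n) ≃L[ℝ] H × Hᗮ :=
    Φ.toContinuousLinearEquiv.trans (WithLp.prodContinuousLinearEquiv 2 ℝ H Hᗮ) with hφdef
  have hφ : MeasurePreserving φ :=
    (WithLp.volume_preserving_ofLp H Hᗮ).comp Φ.measurePreserving
  have hin : ∀ x y, ⟪x, y⟫ = ⟪(φ x).1, (φ y).1⟫ + ⟪(φ x).2, (φ y).2⟫ := by
    intro x y
    rw [← Φ.inner_map_map x y, WithLp.prod_inner_apply]
    rfl
  have hdim : Module.finrank ℝ (H × Hᗮ) = n := by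
    rw [← LinearEquiv.finrank_eq φ.toLinearEquiv]; simp
  have hsymm : ∀ u : H, φ.symm (u, 0) = (u : EuclideanSpace ℝ (Fin n)) := by
    intro u
    rw [ContinuousLinearEquiv.symm_apply_eq]
    have : Φ (u : EuclideanSpace ℝ (Fin n)) = WithLp.toLp 2 (u, 0) := by
      simp [Φ, Submodule.orthogonalDecomposition_apply]
    change _ = WithLp.ofLp (Φ (u : EuclideanSpace ℝ (Fin n)))
    rw [this]
  have main := core hH hk1 hdim (j := j) ((show k ≤ n by omega).trans hj1) φ hφ hin hK hKc h0 hbar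
  simp only [hsymm] at main
  rw [ENNReal.ofReal_pow (by positivity), ← mul_pow] at main
  refine (haus hk1 H hH main).trans ?_
  gcongr
  have e : (16 * 8 ^ j : ℝ≥0∞) = ENNReal.ofReal (16 * 8 ^ j) := by
    rw [ENNReal.ofReal_mul (by norm_num), ENNReal.ofReal_pow (by norm_num)]; simp
  rw [e, ← ENNReal.ofReal_mul (by positivity)]
  refine ENNReal.ofReal_le_ofReal ?_
  calc 128 * (n : ℝ) / k * (16 * 8 ^ j) ≤ 128 * (n : ℝ) / k * (16 * (512 * (Real.log n) ^ 3)) := by gcongr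
    _ = _ := by ring
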